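/- Fix integers 1 ≤ m ≤ n−2, a bounded measurable F:[−1,1]^m→ℝ, and a bounded measurable g:[−1,1]→ℝ that is positive semi-definite on S^{n−m−1}. Regarding the Stiefel-averaged function H as a function of t = ⟨x,y⟩ (which is possible by point-pair invariance), for every integer k ≥ 0 one has ∫_{−1}^1 H(t)·p_k^{(n−3)/2,(n−3)/2}(t)·(1−t²)^{(n−3)/2} dt ≥ 0. -/

import Mathlib

open MeasureTheory Filter Real
open scoped RealInnerProductSpace

noncomputable section

/-- Generalized binomial coefficient `C(a, k)` for real `a`. -/
def genBinom (a : ℝ) (k : ℕ) : ℝ := (∏ i ∈ Finset.range k, (a - i)) / (Nat.factorial k : ℝ)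

/-- The Jacobi polynomial `p_d^{α,β}`, via the standard explicit formula; it is the degree-`d`
polynomial orthogonal to lower degrees for the weight `(1-t)^α (1+t)^β` on `[-1,1]`,
normalized by `p_d^{α,β}(1) = Γ(d+α+1)/(Γ(α+1)Γ(d+1))`. -/
def jacobiP (α β : ℝ) (d : ℕ) (x : ℝ) : ℝ :=
  ∑ s ∈ Finset.range (d + 1),
    genBinom ((d : ℝ) + α) (d - s) * genBinom ((d : ℝ) + β) s *
      ((x - 1) / 2) ^ s * ((x + 1) / 2) ^ (d - s)

/-- The Stiefel manifold of orthonormal `m`-frames in `ℝ^n`. -/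
abbrev Stiefel (n m : ℕ) : Type :=
  {z : Fin m → EuclideanSpace ℝ (Fin n) // Orthonormal ℝ z}

/-- Action of a linear isometry on frames. -/
def frameMap {n m : ℕ} (A : EuclideanSpace ℝ (Fin n) ≃ₗᵢ[ℝ] EuclideanSpace ℝ (Fin n))
    (z : Stiefel n m) : Stiefel n m :=
  ⟨fun i => A (z.1 i), z.2.comp_linearIsometry A.toLinearIsometry⟩

/-- `ν` is an `O(n)`-invariant probability measure on the Stiefel manifold. -/
def IsInvProb {n m : ℕ} (ν : Measure (Stiefel n m)) : Prop :=
  IsProbabilityMeasure ν ∧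
    ∀ A : EuclideanSpace ℝ (Fin n) ≃ₗᵢ[ℝ] EuclideanSpace ℝ (Fin n),
      Measure.map (frameMap A) ν = ν

/-- Normalized projection of `x` onto the orthogonal complement of `span (z 1, …, z m)`. -/
def projC {n m : ℕ} (z : Fin m → EuclideanSpace ℝ (Fin n)) (x : EuclideanSpace ℝ (Fin n)) :
    EuclideanSpace ℝ (Fin n) :=
  ‖x - ∑ i, ⟪x, z i⟫ • z i‖⁻¹ • (x - ∑ i, ⟪x, z i⟫ • z i)

/-- The integrand `h(x, y; z₁, …, z_m)`. -/
def hfun {n m : ℕ} (F : (Fin m → ℝ) → ℝ) (g : ℝ → ℝ)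
    (x y : EuclideanSpace ℝ (Fin n)) (z : Fin m → EuclideanSpace ℝ (Fin n)) : ℝ :=
  F (fun i => ⟪x, z i⟫) * F (fun i => ⟪y, z i⟫) * g ⟪projC z x, projC z y⟫

/-- The Stiefel average `H(x,y)`. -/
def Hfun {n m : ℕ} (ν : Measure (Stiefel n m)) (F : (Fin m → ℝ) → ℝ) (g : ℝ → ℝ)
    (x y : EuclideanSpace ℝ (Fin n)) : ℝ :=
  ∫ z, hfun F g x y z.1 ∂ν

/-- `g` is positive semi-definite on the unit sphere `S^{N-1} ⊂ ℝ^N`. -/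
def PosSemidefOnSphere (N : ℕ) (g : ℝ → ℝ) : Prop :=
  ∀ (M : ℕ) (w : Fin M → EuclideanSpace ℝ (Fin N)) (c : Fin M → ℝ),
    (∀ i, ‖w i‖ = 1) → 0 ≤ ∑ i, ∑ j, c i * c j * g ⟪w i, w j⟫

/-- The Stiefel average `H` as a function of `t = ⟪x, y⟫`, evaluated on a canonical pair of
unit vectors with inner product `t` (legitimate by point-pair invariance). -/
def HofT {n m : ℕ} (hn : 2 ≤ n) (ν : Measure (Stiefel n m)) (F : (Fin m → ℝ) → ℝ)
    (g : ℝ → ℝ) (t : ℝ) : ℝ :=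
  Hfun ν F g (EuclideanSpace.single (⟨0, by omega⟩ : Fin n) 1)
    (t • EuclideanSpace.single (⟨0, by omega⟩ : Fin n) 1 +
      Real.sqrt (1 - t ^ 2) • EuclideanSpace.single (⟨1, by omega⟩ : Fin n) 1)


lemma law_cos (N : ℕ) (hN : 2 ≤ N) (f : ℝ → ℝ) :
    ∫ θ in Set.Ioo (-π) π, (if 0 < sin θ then (sin θ) ^ (N-1) * f (cos θ) else 0) =
      ∫ t in (-1:ℝ)..1, f t * (1 - t^2) ^ (((N:ℝ) - 2)/2) := by
  have h1 : ∫ θ in Set.Ioo (-π) π, (if 0 < sin θ then (sin θ) ^ (N-1) * f (cos θ) else 0) =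
      ∫ θ in Set.Ioo 0 π, (sin θ) ^ (N-1) * f (cos θ) := by
    rw [← integral_indicator measurableSet_Ioo, ← integral_indicator measurableSet_Ioo]
    congr 1
    ext θ
    by_cases h : θ ∈ Set.Ioo 0 π
    · have h' : θ ∈ Set.Ioo (-π) π := ⟨by linarith [h.1, pi_pos], h.2⟩
      rw [Set.indicator_of_mem h, Set.indicator_of_mem h', if_pos (sin_pos_of_mem_Ioo h)]
    · rw [Set.indicator_of_notMem h]
      by_cases h' : θ ∈ Set.Ioo (-π) π
      · rw [Set.indicator_of_mem h', if_neg]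
        have : θ ≤ 0 := by
          by_contra hc
          exact h ⟨by linarith, h'.2⟩
        exact not_lt.2 (sin_nonpos_of_nonpos_of_neg_pi_le this h'.1.le)
      · rw [Set.indicator_of_notMem h']
  have himg : cos '' Set.Ioo 0 π = Set.Ioo (-1) 1 := by
    ext t
    constructor
    · rintro ⟨θ, hθ, rfl⟩
      have := sin_pos_of_mem_Ioo hθ
      have h2 := sin_sq_add_cos_sq θ
      constructor <;> nlinarith
    · intro ht
      refine ⟨arccos t, ⟨arccos_pos.2 ht.2, ?_⟩, cos_arccos ht.1.le ht.2.le⟩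
      refine lt_of_le_of_ne (arccos_le_pi t) ?_
      intro h
      have := arccos_eq_pi.1 h
      linarith [ht.1]
  rw [h1, intervalIntegral.integral_of_le (by norm_num), integral_Ioc_eq_integral_Ioo, ← himg,
    integral_image_eq_integral_abs_deriv_smul measurableSet_Ioo
      (fun x _ => (hasDerivAt_cos x).hasDerivWithinAt)
      (injOn_cos.mono Set.Ioo_subset_Icc_self)]
  refine setIntegral_congr_fun measurableSet_Ioo ?_
  intro θ hθ
  have hs := sin_pos_of_mem_Ioo hθ
  have e1 : (1 - cos θ ^ 2) ^ (((N:ℝ) - 2)/2) = sin θ ^ (N - 2) := by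
    rw [← sin_sq, ← rpow_natCast (sin θ) 2, ← rpow_mul hs.le, ← rpow_natCast (sin θ) (N-2)]
    congr 1
    push_cast [Nat.cast_sub hN]
    ring
  simp only [smul_eq_mul, abs_neg, abs_of_pos hs]
  rw [e1]
  obtain ⟨k, rfl⟩ := Nat.exists_eq_add_of_le hN
  have : 2 + k - 1 = k + 1 := by omega
  rw [this]
  simp
  ring

def psiFun (f : ℝ → ℝ) (p : ℝ × ℝ) : ℝ :=
  if p.1^2 + p.2^2 < 1 then f (p.1 / √(p.1^2+p.2^2)) else 0

lemma measurable_psiFun {f : ℝ → ℝ} (hf : Measurable f) : Measurable (psiFun f) := by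
  unfold psiFun
  refine Measurable.ite (measurableSet_lt (by fun_prop) (by fun_prop)) ?_ measurable_const
  exact hf.comp (by fun_prop)

lemma law_polar (N : ℕ) (hN : 2 ≤ N) (f : ℝ → ℝ) :
    ∫ p : ℝ × ℝ, (if 0 < p.2 then p.2 ^ (N-1) * psiFun f p else 0) =
     (1 / ((N:ℝ)+1)) * ∫ t in (-1:ℝ)..1, f t * (1 - t^2) ^ (((N:ℝ) - 2)/2) := by
  rw [← integral_comp_polarCoord_symm, ← law_cos N hN]
  have h2 : ∫ ρ in Set.Ioi (0:ℝ), (if ρ < 1 then ρ ^ N else 0) = 1 / ((N:ℝ)+1) := by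
    have : ∫ ρ in Set.Ioi (0:ℝ), (if ρ < 1 then ρ ^ N else 0) = ∫ ρ in (0:ℝ)..1, ρ ^ N := by
      rw [intervalIntegral.integral_of_le (by norm_num), integral_Ioc_eq_integral_Ioo,
        ← integral_indicator measurableSet_Ioi, ← integral_indicator measurableSet_Ioo]
      congr 1
      ext ρ
      simp only [Set.indicator, Set.mem_Ioi, Set.mem_Ioo]
      split_ifs <;> simp_all
    rw [this, integral_pow]
    simp
  rw [← h2]
  have := setIntegral_prod_mul (μ := (volume : Measure ℝ)) (ν := (volume : Measure ℝ))
    (fun ρ : ℝ => if ρ < 1 then ρ ^ N else 0)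
    (fun θ => if 0 < sin θ then (sin θ) ^ (N-1) * f (cos θ) else 0) (Set.Ioi 0) (Set.Ioo (-π) π)
  rw [← this]
  have ht : polarCoord.target = Set.Ioi (0:ℝ) ×ˢ Set.Ioo (-π) π := rfl
  rw [ht]
  refine setIntegral_congr_fun (measurableSet_Ioi.prod measurableSet_Ioo) ?_
  rintro ⟨ρ, θ⟩ ⟨hρ, hθ⟩
  simp only [Set.mem_Ioi] at hρ
  simp only [polarCoord_symm_apply, psiFun, smul_eq_mul]
  have e : (ρ * cos θ)^2 + (ρ * sin θ)^2 = ρ^2 := by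
    have := sin_sq_add_cos_sq θ
    linear_combination ρ^2 * this
  rw [e, sqrt_sq hρ.le, mul_div_cancel_left₀ _ hρ.ne']
  have e2 : ρ^2 < 1 ↔ ρ < 1 := by
    constructor <;> intro <;> nlinarith
  simp only [e2, mul_pos_iff_of_pos_left hρ]
  obtain ⟨k, rfl⟩ := Nat.exists_eq_add_of_le hN
  have : 2 + k - 1 = k + 1 := by omega
  rw [this]
  split_ifs
  · ring
  all_goals simp

lemma law_radial (N : ℕ) (hN : 2 ≤ N) (f : ℝ → ℝ) (hf : Measurable f) (B : ℝ)
    (hB : ∀ t, |f t| ≤ B) :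
    ∫ p : ℝ × EuclideanSpace ℝ (Fin N), psiFun f (p.1, ‖p.2‖) =
     (N * volume.real (Metric.ball (0 : EuclideanSpace ℝ (Fin N)) 1) * (1 / ((N:ℝ)+1))) *
       ∫ t in (-1:ℝ)..1, f t * (1 - t^2) ^ (((N:ℝ) - 2)/2) := by
  have hB0 : 0 ≤ B := (abs_nonneg _).trans (hB 0)
  have : Nonempty (Fin N) := ⟨⟨0, by omega⟩⟩
  have hm := measurable_psiFun hf
  have hbd : ∀ p, |psiFun f p| ≤ B := by
    intro p; unfold psiFun; split_ifs
    · exact hB _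
    · simpa using hB0
  have hintg : Integrable (fun p : ℝ × EuclideanSpace ℝ (Fin N) => psiFun f (p.1, ‖p.2‖))
      (volume.prod volume) := by
    have hK : IsCompact (Metric.closedBall (0:ℝ) 1 ×ˢ
        Metric.closedBall (0 : EuclideanSpace ℝ (Fin N)) 1) :=
      (isCompact_closedBall _ _).prod (isCompact_closedBall _ _)
    have h1 : IntegrableOn (fun p : ℝ × EuclideanSpace ℝ (Fin N) => psiFun f (p.1, ‖p.2‖))
        (Metric.closedBall (0:ℝ) 1 ×ˢ
        Metric.closedBall (0 : EuclideanSpace ℝ (Fin N)) 1) (volume.prod volume) := by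
      refine IntegrableOn.of_bound hK.measure_lt_top ?_ B ?_
      · exact (hm.comp (by fun_prop)).aestronglyMeasurable
      · exact Eventually.of_forall fun p => hbd _
    refine (integrableOn_iff_integrable_of_support_subset ?_).1 h1
    rintro ⟨a, b⟩ h
    simp only [psiFun, Function.mem_support, ne_eq, ite_eq_right_iff, not_forall] at h
    obtain ⟨h, -⟩ := h
    simp only [Set.mem_prod, mem_closedBall_zero_iff, Real.norm_eq_abs]
    constructor
    · rw [abs_le_one_iff_mul_self_le_one]; nlinarith [sq_nonneg ‖b‖]
    · nlinarith [norm_nonneg b, sq_nonneg a]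
  rw [show (volume : Measure (ℝ × EuclideanSpace ℝ (Fin N))) = volume.prod volume from rfl,
    integral_prod _ hintg]
  have hin : ∀ a : ℝ, ∫ b : EuclideanSpace ℝ (Fin N), psiFun f (a, ‖b‖) =
     (N * volume.real (Metric.ball (0 : EuclideanSpace ℝ (Fin N)) 1)) *
      ∫ r : ℝ, (if 0 < r then r ^ (N-1) * psiFun f (a, r) else 0) := by
    intro a
    have := integral_fun_norm_addHaar (volume : Measure (EuclideanSpace ℝ (Fin N)))
      (fun r => psiFun f (a, r))
    rw [this]
    simp only [finrank_euclideanSpace, Fintype.card_fin, nsmul_eq_mul, smul_eq_mul]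
    rw [mul_assoc, ← integral_indicator measurableSet_Ioi]
    rfl
  simp only [hin]
  rw [integral_const_mul, mul_assoc _ (1 / ((N:ℝ)+1)), ← law_polar N hN f]
  congr 1
  rw [show (volume : Measure (ℝ × ℝ)) = volume.prod volume from rfl, integral_prod]
  have hK : IsCompact (Metric.closedBall (0:ℝ) 1 ×ˢ Metric.closedBall (0 : ℝ) 1) :=
      (isCompact_closedBall _ _).prod (isCompact_closedBall _ _)
  have hsup : ∀ p : ℝ × ℝ, psiFun f p ≠ 0 → p ∈ (Metric.closedBall (0:ℝ) 1 ×ˢ Metric.closedBall (0 : ℝ) 1) := by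
    rintro ⟨a, b⟩ h
    simp only [psiFun, ne_eq, ite_eq_right_iff, not_forall] at h
    obtain ⟨h, -⟩ := h
    simp only [Set.mem_prod, mem_closedBall_zero_iff, Real.norm_eq_abs]
    constructor
    · rw [abs_le_one_iff_mul_self_le_one]; nlinarith [sq_nonneg b]
    · rw [abs_le_one_iff_mul_self_le_one]; nlinarith [sq_nonneg a]
  have h1 : IntegrableOn (fun p : ℝ × ℝ => if 0 < p.2 then p.2 ^ (N-1) * psiFun f p else 0)
        (Metric.closedBall (0:ℝ) 1 ×ˢ Metric.closedBall (0 : ℝ) 1) (volume.prod volume) := by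
    refine IntegrableOn.of_bound hK.measure_lt_top ?_ B ?_
    · refine Measurable.aestronglyMeasurable ?_
      exact Measurable.ite (measurableSet_lt (by fun_prop) (by fun_prop)) (by fun_prop) measurable_const
    · rw [ae_restrict_iff' hK.measurableSet]
      refine Eventually.of_forall fun p hp => ?_
      split_ifs with h
      · rw [norm_mul, norm_pow, ← one_mul B]
        have := hp.2
        rw [mem_closedBall_zero_iff] at this
        exact mul_le_mul (pow_le_one₀ (norm_nonneg _) this) (hbd p) (abs_nonneg _) zero_le_one
      · simpa using hB0
  refine (integrableOn_iff_integrable_of_support_subset ?_).1 h1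
  intro p hp
  apply hsup
  intro h0
  apply hp
  simp [h0]

def sigma0 (n : ℕ) : Measure (EuclideanSpace ℝ (Fin n)) :=
  Measure.map (fun z => ‖z‖⁻¹ • z) (volume.restrict (Metric.ball 0 1))

lemma law_e0 (N : ℕ) (hN : 2 ≤ N) (f : ℝ → ℝ) (hf : Measurable f) (B : ℝ)
    (hB : ∀ t, |f t| ≤ B) :
    ∫ e, f (e 0) ∂(sigma0 (N+1)) =
     (N * volume.real (Metric.ball (0 : EuclideanSpace ℝ (Fin N)) 1) * (1 / ((N:ℝ)+1))) *
       ∫ t in (-1:ℝ)..1, f t * (1 - t^2) ^ (((N:ℝ) - 2)/2) := by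
  have hfm : Measurable (fun e : EuclideanSpace ℝ (Fin (N+1)) => f (e 0)) :=
    hf.comp (by fun_prop)
  rw [← law_radial N hN f hf B hB, sigma0, integral_map (by fun_prop) hfm.aestronglyMeasurable, ← integral_indicator measurableSet_ball]
  have mp1 := (EuclideanSpace.volume_preserving_symm_measurableEquiv_toLp (Fin (N+1)))
  have mp2 := volume_preserving_piFinSuccAbove (fun _ : Fin (N+1) => ℝ) 0
  have mp3 := (MeasurePreserving.id (volume : Measure ℝ)).prod
    (EuclideanSpace.volume_preserving_symm_measurableEquiv_toLp (Fin N)).symm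
  have mp := mp3.comp (mp2.comp mp1)
  have key := mp.integral_comp' (f := (MeasurableEquiv.toLp 2 (Fin (N+1) → ℝ)).symm.trans
     ((MeasurableEquiv.piFinSuccAbove (fun _ : Fin (N+1) => ℝ) 0).trans
      ((MeasurableEquiv.refl ℝ).prodCongr (MeasurableEquiv.toLp 2 (Fin N → ℝ)))))
     (fun p : ℝ × EuclideanSpace ℝ (Fin N) => psiFun f (p.1, ‖p.2‖))
  rw [show (volume : Measure (ℝ × EuclideanSpace ℝ (Fin N))) = volume.prod volume from rfl, ← key]
  congr 1
  ext z
  have hz : ‖z‖^2 = z 0 ^ 2 + ‖(WithLp.toLp 2 (fun i : Fin N => z i.succ) : EuclideanSpace ℝ (Fin N))‖^2 := by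
    simp [EuclideanSpace.norm_sq_eq, Fin.sum_univ_succ]
  change _ = psiFun f (z 0, ‖(WithLp.toLp 2 (fun i : Fin N => z i.succ) : EuclideanSpace ℝ (Fin N))‖)
  have e2 : ‖z‖^2 < 1 ↔ ‖z‖ < 1 := by
    have := norm_nonneg z
    constructor <;> intro <;> nlinarith
  simp only [psiFun, ← hz, sqrt_sq (norm_nonneg z), e2, Set.indicator, mem_ball_zero_iff]
  simp [div_eq_inv_mul]


lemma exists_basis_pair {n : ℕ} (hn : 2 ≤ n) (x y : EuclideanSpace ℝ (Fin n)) (hx : ‖x‖ = 1)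
    (hy : ‖y‖ = 1) : ∃ b : OrthonormalBasis (Fin n) ℝ (EuclideanSpace ℝ (Fin n)),
      b ⟨0, by omega⟩ = x ∧ y = ⟪x, y⟫ • b ⟨0, by omega⟩ + √(1 - ⟪x, y⟫ ^ 2) • b ⟨1, by omega⟩ := by
  set i0 : Fin n := ⟨0, by omega⟩ with hi0
  set i1 : Fin n := ⟨1, by omega⟩ with hi1
  have h01 : i0 ≠ i1 := by simp [hi0, hi1]
  have hcard : Module.finrank ℝ (EuclideanSpace ℝ (Fin n)) = Fintype.card (Fin n) := by simp
  set t := ⟪x, y⟫ with ht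
  have hxx : ⟪x, x⟫ = 1 := by rw [real_inner_self_eq_norm_sq, hx]; norm_num
  have hyy : ⟪y, y⟫ = 1 := by rw [real_inner_self_eq_norm_sq, hy]; norm_num
  have hn2 : ‖y - t • x‖ ^ 2 = 1 - t ^ 2 := by
    rw [← real_inner_self_eq_norm_sq, inner_sub_left, inner_sub_right, inner_sub_right]
    simp only [inner_smul_left, inner_smul_right, hxx, hyy, real_inner_comm x y, ← ht]
    simp
    ring
  have hnorm : √(1 - t^2) = ‖y - t • x‖ := by rw [← hn2, sqrt_sq (norm_nonneg _)]
  by_cases h0 : y - t • x = 0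
  · obtain ⟨b, hb⟩ := Orthonormal.exists_orthonormalBasis_extension_of_card_eq (𝕜 := ℝ) hcard
      (v := fun _ => x) (s := {i0}) (by
        constructor
        · intro i; simpa using hx
        · rintro ⟨i, hi⟩ ⟨j, hj⟩ hij
          simp at hi hj
          simp [hi, hj] at hij)
    refine ⟨b, hb i0 (by simp), ?_⟩
    rw [hb i0 (by simp), hnorm, h0]
    simp
    exact sub_eq_zero.1 h0
  · have hne : ‖y - t • x‖ ≠ 0 := norm_ne_zero_iff.2 h0
    set x' := ‖y - t • x‖⁻¹ • (y - t • x) with hx'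
    have hx'n : ‖x'‖ = 1 := by
      rw [hx', norm_smul, norm_inv, norm_norm, inv_mul_cancel₀ hne]
    have hxx' : ⟪x, x'⟫ = 0 := by
      rw [hx', inner_smul_right, inner_sub_right, inner_smul_right, hxx, ← ht]; simp
    obtain ⟨b, hb⟩ := Orthonormal.exists_orthonormalBasis_extension_of_card_eq (𝕜 := ℝ) hcard
      (v := fun i => if i = i0 then x else x') (s := {i0, i1}) (by
        constructor
        · rintro ⟨i, hi⟩
          simp only [Set.domRestrict_apply]
          split_ifs
          · exact hx
          · exact hx'n
        · rintro ⟨i, hi⟩ ⟨j, hj⟩ hij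
          simp at hi hj
          have hij' : i ≠ j := fun h => hij (by simp [h])
          rcases hi with rfl | rfl <;> rcases hj with rfl | rfl
          · exact absurd rfl hij'
          · simp [Ne.symm h01, hxx']
          · simp [Ne.symm h01, real_inner_comm, hxx']
          · exact absurd rfl hij')
    have hb0 : b i0 = x := by rw [hb i0 (by simp)]; simp
    have hb1 : b i1 = x' := by rw [hb i1 (by simp)]; simp [Ne.symm h01]
    refine ⟨b, hb0, ?_⟩
    rw [hb0, hb1, hnorm, hx', smul_smul, mul_inv_cancel₀ hne]
    simp

structure GoodMeas (n : ℕ) (σ : Measure (EuclideanSpace ℝ (Fin n))) : Prop where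
  prob : IsProbabilityMeasure σ
  inv : ∀ A : EuclideanSpace ℝ (Fin n) ≃ₗᵢ[ℝ] EuclideanSpace ℝ (Fin n), Measure.map A σ = σ
  norm : ∀ᵐ e ∂σ, ‖e‖ = 1
  sub : ∀ S : Submodule ℝ (EuclideanSpace ℝ (Fin n)), S ≠ ⊤ → ∀ᵐ e ∂σ, e ∉ S
  law : ∃ C : ℝ, 0 < C ∧ ∀ x : EuclideanSpace ℝ (Fin n), ‖x‖ = 1 → ∀ f : ℝ → ℝ, Measurable f →
    ∀ B, (∀ t ∈ Set.Icc (-1:ℝ) 1, |f t| ≤ B) →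
    ∫ e, f ⟪x, e⟫ ∂σ = C * ∫ t in (-1:ℝ)..1, f t * (1 - t^2) ^ (((n:ℝ) - 3)/2)

lemma sigma0_inv (n : ℕ) (A : EuclideanSpace ℝ (Fin n) ≃ₗᵢ[ℝ] EuclideanSpace ℝ (Fin n)) :
    Measure.map A (sigma0 n) = sigma0 n := by
  have hA : Measurable A := A.continuous.measurable
  unfold sigma0
  rw [Measure.map_map hA (by fun_prop)]
  have : (A ∘ fun z => ‖z‖⁻¹ • z) = (fun z => ‖z‖⁻¹ • z) ∘ A := by
    ext1 z; simp
  rw [this, ← Measure.map_map (by fun_prop) hA]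
  congr 1
  have h := (A.measurePreserving).restrict_preimage (s := Metric.ball 0 1) measurableSet_ball
  have h2 : A ⁻¹' Metric.ball 0 1 = Metric.ball 0 1 := by ext z; simp
  rw [h2] at h
  exact h.map_eq

lemma exists_good (n : ℕ) (hn : 3 ≤ n) : ∃ σ, GoodMeas n σ := by
  obtain ⟨N, rfl⟩ : ∃ N, n = N + 1 := ⟨n-1, by omega⟩
  have hN : 2 ≤ N := by omega
  have hmass : sigma0 (N+1) Set.univ = volume (Metric.ball (0 : EuclideanSpace ℝ (Fin (N+1))) 1) := by
    rw [sigma0, Measure.map_apply (by fun_prop) MeasurableSet.univ]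
    simp
  have hpos : 0 < volume (Metric.ball (0 : EuclideanSpace ℝ (Fin (N+1))) 1) :=
    Metric.measure_ball_pos _ _ one_pos
  have hfin : volume (Metric.ball (0 : EuclideanSpace ℝ (Fin (N+1))) 1) ≠ ⊤ :=
    measure_ball_lt_top.ne
  set V := volume (Metric.ball (0 : EuclideanSpace ℝ (Fin (N+1))) 1) with hV
  have inv : ∀ A : EuclideanSpace ℝ (Fin (N+1)) ≃ₗᵢ[ℝ] EuclideanSpace ℝ (Fin (N+1)),
     Measure.map A (V⁻¹ • sigma0 (N+1)) = (V⁻¹ • sigma0 (N+1)) := by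
    intro A; rw [Measure.map_smul, sigma0_inv]
  have hsub : ∀ S : Submodule ℝ (EuclideanSpace ℝ (Fin (N+1))), S ≠ ⊤ →
      ∀ᵐ z ∂(volume.restrict (Metric.ball (0 : EuclideanSpace ℝ (Fin (N+1))) 1)), z ∉ S := by
    intro S hS
    refine ae_restrict_of_ae ?_
    exact measure_eq_zero_iff_ae_notMem.1 (Measure.addHaar_submodule volume S hS)
  have hne : ∀ᵐ z ∂(volume.restrict (Metric.ball (0 : EuclideanSpace ℝ (Fin (N+1))) 1)), z ≠ 0 := by
    have := hsub ⊥ bot_ne_top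
    simpa using this
  have norm : ∀ᵐ e ∂(V⁻¹ • sigma0 (N+1)), ‖e‖ = 1 := by
    refine Measure.ae_smul_measure ?_ _
    rw [sigma0, ae_map_iff (by fun_prop) (measurableSet_eq_fun (by fun_prop) (by fun_prop))]
    filter_upwards [hne] with z hz
    simp [norm_smul, hz]
  refine ⟨V⁻¹ • sigma0 (N+1), ⟨⟨?_⟩, inv, norm, ?_, ?_⟩⟩
  · rw [Measure.smul_apply, hmass, smul_eq_mul, ENNReal.inv_mul_cancel hpos.ne' hfin]
  · intro S hS
    refine Measure.ae_smul_measure ?_ _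
    rw [sigma0, ae_map_iff (p := fun e => e ∉ S) (by fun_prop) S.closed_of_finiteDimensional.measurableSet.compl]
    filter_upwards [hne, hsub S hS] with z hz hzS h
    apply hzS
    have := S.smul_mem ‖z‖ h
    rwa [smul_smul, mul_inv_cancel₀ (norm_ne_zero_iff.2 hz), one_smul] at this
  · have hp : 0 < volume.real (Metric.ball (0 : EuclideanSpace ℝ (Fin N)) 1) :=
      ENNReal.toReal_pos (Metric.measure_ball_pos _ _ one_pos).ne' measure_ball_lt_top.ne
    refine ⟨(V⁻¹).toReal * (N * volume.real (Metric.ball (0 : EuclideanSpace ℝ (Fin N)) 1) *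
      (1 / ((N:ℝ)+1))), ?_, ?_⟩
    · have : 0 < (V⁻¹).toReal := ENNReal.toReal_pos (by simp [hfin]) (by simp [hpos.ne'])
      have : (0:ℝ) < N := by exact_mod_cast (by omega : 0 < N)
      positivity
    · intro x hx f hf B hB
      obtain ⟨b, hb, -⟩ := exists_basis_pair (by omega) x x hx hx
      set f' : ℝ → ℝ := fun t => if t ∈ Set.Icc (-1:ℝ) 1 then f t else 0 with hf'
      have hf'm : Measurable f' := Measurable.ite measurableSet_Icc hf measurable_const
      have hB0 : 0 ≤ B := (abs_nonneg _).trans (hB 0 (by simp))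
      have hf'b : ∀ t, |f' t| ≤ B := by
        intro t; simp only [hf']; split_ifs with h
        · exact hB t h
        · simpa using hB0
      have h1 := law_e0 N hN f' hf'm B hf'b
      have h2 : ∫ e, f ⟪x, e⟫ ∂(V⁻¹ • sigma0 (N+1)) = ∫ e, f' (e 0) ∂(V⁻¹ • sigma0 (N+1)) := by
        conv_rhs => rw [← inv b.repr]
        have hm : Measurable (fun e : EuclideanSpace ℝ (Fin (N+1)) => f' (e 0)) :=
          hf'm.comp (by fun_prop)
        rw [integral_map b.repr.continuous.measurable.aemeasurable hm.aestronglyMeasurable]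
        refine integral_congr_ae ?_
        filter_upwards [norm] with e he
        have e1 : b.repr e 0 = ⟪x, e⟫ := by
          rw [b.repr_apply_apply]
          rw [← hb]; rfl
        rw [e1]
        simp only [hf']
        rw [if_pos]
        rw [Set.mem_Icc, ← abs_le]
        simpa [hx, he] using abs_real_inner_le_norm x e
      rw [h2, integral_smul_measure, h1, smul_eq_mul, mul_assoc _ _ (∫ t in (-1:ℝ)..1, f t * _)]
      congr 2
      refine intervalIntegral.integral_congr ?_
      intro t ht
      rw [Set.uIcc_of_le (by norm_num)] at ht
      simp only [hf', if_pos ht]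
      push_cast
      congr 2
      ring


lemma real_beta (a b : ℝ) (ha : 0 ≤ a) (hb : 0 ≤ b) :
    ∫ x in (0:ℝ)..1, x ^ a * (1 - x) ^ b = Gamma (a+1) * Gamma (b+1) / Gamma (a + b + 2) := by
  have h := Complex.betaIntegral_eq_Gamma_mul_div ((a + 1 : ℝ) : ℂ) ((b + 1 : ℝ) : ℂ)
    (by rw [Complex.ofReal_re]; linarith) (by rw [Complex.ofReal_re]; linarith)
  rw [Complex.betaIntegral, ← Complex.ofReal_add, Complex.Gamma_ofReal, Complex.Gamma_ofReal,
    Complex.Gamma_ofReal] at h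
  have h2 : (∫ x in (0:ℝ)..1, (x:ℂ) ^ (((a + 1 : ℝ) : ℂ) - 1) * (1 - (x:ℂ)) ^ (((b + 1 : ℝ) : ℂ) - 1))
      = ((∫ x in (0:ℝ)..1, x ^ a * (1 - x) ^ b : ℝ) : ℂ) := by
    rw [← intervalIntegral.integral_ofReal]
    refine intervalIntegral.integral_congr ?_
    intro x hx
    rw [Set.uIcc_of_le (by norm_num)] at hx
    have h1 : (0:ℝ) ≤ 1 - x := by linarith [hx.2]
    simp only
    push_cast
    rw [Complex.ofReal_cpow hx.1, Complex.ofReal_cpow h1]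
    push_cast
    congr 2 <;> ring
  rw [h2] at h
  have h3 : a + b + 2 = a + 1 + (b + 1) := by ring
  rw [h3]
  exact_mod_cast h

lemma real_beta' (a b : ℝ) (ha : 0 ≤ a) (hb : 0 ≤ b) :
    ∫ t in (-1:ℝ)..1, ((1 - t)/2) ^ a * ((1+t)/2) ^ b =
      2 * (Gamma (a+1) * Gamma (b+1) / Gamma (a + b + 2)) := by
  rw [← real_beta a b ha hb]
  have := intervalIntegral.integral_comp_sub_div (a := -1) (b := 1)
    (fun x : ℝ => x ^ a * (1 - x) ^ b) (c := 2) (by norm_num) (1/2)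
  norm_num at this
  rw [← this]
  refine intervalIntegral.integral_congr ?_
  intro x hx
  simp only
  congr 2 <;> ring

lemma genBinom_Gamma (a : ℝ) (j : ℕ) (h : (j:ℝ) < a + 1) :
    genBinom a j * (Nat.factorial j : ℝ) * Gamma (a - j + 1) = Gamma (a + 1) := by
  have hf : (Nat.factorial j : ℝ) ≠ 0 := by positivity
  rw [genBinom, div_mul_cancel₀ _ hf]
  induction j with
  | zero => simp
  | succ j ih =>
    push_cast at h
    rw [Finset.prod_range_succ, ← ih (by linarith) (by positivity)]
    have : a - (j:ℝ) ≠ 0 := by linarith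
    rw [Gamma_add_one this]
    push_cast
    rw [show a - ((j:ℝ) + 1) + 1 = a - j by ring]
    ring

lemma Gamma_asc (z : ℝ) (hz : 0 < z) (i : ℕ) :
    Gamma (z + i) = (ascPochhammer ℝ i).eval z * Gamma z := by
  induction i with
  | zero => simp
  | succ i ih =>
    rw [ascPochhammer_succ_eval]
    push_cast
    rw [← add_assoc, Gamma_add_one (by positivity), ih]
    ring

lemma alt_sum_poly (Q : Polynomial ℝ) (k : ℕ) (hQ : Q.natDegree < k) :
    ∑ s ∈ Finset.range (k+1), (-1:ℝ)^s * (k.choose s) * Q.eval (s:ℝ) = 0 := by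
  have h := congrFun (Polynomial.fwdDiff_iter_eq_zero_of_degree_lt hQ) 0
  rw [fwdDiff_iter_eq_sum_shift] at h
  have h2 : ∑ s ∈ Finset.range (k+1), (-1:ℝ)^s * (k.choose s) * Q.eval (s:ℝ) =
     (-1)^k * ∑ s ∈ Finset.range (k+1), ((-1 : ℤ) ^ (k - s) * k.choose s) • Q.eval (0 + s • (1:ℝ)) := by
    rw [Finset.mul_sum]
    refine Finset.sum_congr rfl fun s hs => ?_
    have hs' : s ≤ k := by simpa [Nat.lt_succ_iff] using hs
    obtain ⟨j, rfl⟩ := Nat.exists_eq_add_of_le hs'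
    simp only [zsmul_eq_mul]
    push_cast
    simp only [nsmul_eq_mul, mul_one, zero_add, add_tsub_cancel_left]
    have : (-1:ℝ)^(s+j) * (-1)^j = (-1)^s := by
      rw [pow_add, mul_assoc, ← mul_pow]; simp
    rw [← this]; ring
  rw [h2, h]; simp

open Polynomial in
def jacPoly (α : ℝ) (k : ℕ) : ℝ[X] :=
  ∑ s ∈ Finset.range (k + 1),
    C (genBinom ((k : ℝ) + α) (k - s) * genBinom ((k : ℝ) + α) s) *
      (C (1/2) * (X - 1)) ^ s * (C (1/2) * (X + 1)) ^ (k - s)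

lemma jacPoly_eval (α : ℝ) (k : ℕ) (t : ℝ) : (jacPoly α k).eval t = jacobiP α α k t := by
  simp only [jacPoly, jacobiP, Polynomial.eval_finsetSum]
  refine Finset.sum_congr rfl fun s _ => ?_
  simp
  ring

lemma jacPoly_degree (α : ℝ) (k : ℕ) : (jacPoly α k).natDegree ≤ k := by
  refine Polynomial.natDegree_sum_le_of_forall_le _ _ ?_
  intro s hs
  have hs' : s ≤ k := by simpa [Nat.lt_succ_iff] using hs
  compute_degree
  omega

lemma jacPoly_one (α : ℝ) (hα : 0 ≤ α) (k : ℕ) : 0 < (jacPoly α k).eval 1 := by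
  rw [jacPoly_eval, jacobiP, Finset.sum_eq_single 0]
  · simp only [genBinom]
    norm_num
    refine div_pos (Finset.prod_pos ?_) (by positivity)
    intro i hi
    have : (i:ℝ) < k := by exact_mod_cast Finset.mem_range.1 hi
    linarith
  · intro b _ hb
    simp [hb]
  · simp

lemma weight_eq (α : ℝ) (t : ℝ) (ht : t ∈ Set.Icc (-1:ℝ) 1) :
    (1 - t^2) ^ α = 4 ^ α * (((1-t)/2)^α * ((1+t)/2)^α) := by
  have h1 : 0 ≤ (1-t)/2 := by linarith [ht.2]
  have h2 : 0 ≤ (1+t)/2 := by linarith [ht.1]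
  rw [← mul_rpow h1 h2, ← mul_rpow (by norm_num) (by positivity)]
  congr 1; ring

lemma cont_pow (a : ℝ) (ha : 0 ≤ a) (b : ℝ) (hb : 0 ≤ b) :
   Continuous fun t : ℝ => ((1-t)/2)^a * ((1+t)/2)^b := by
  refine Continuous.mul ?_ ?_
  · exact Continuous.rpow_const (by fun_prop) fun _ => Or.inr ha
  · exact Continuous.rpow_const (by fun_prop) fun _ => Or.inr hb

lemma jac_orth_mono (α : ℝ) (hα : 0 ≤ α) (k i : ℕ) (hi : i < k) :
    ∫ t in (-1:ℝ)..1, (jacPoly α k).eval t * ((1-t)/2)^i * (1 - t^2) ^ α = 0 := by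
  have h1 : ∫ t in (-1:ℝ)..1, (jacPoly α k).eval t * ((1-t)/2)^i * (1 - t^2) ^ α =
     ∫ t in (-1:ℝ)..1, ∑ s ∈ Finset.range (k+1),
       (4 ^ α * (genBinom ((k : ℝ) + α) (k - s) * genBinom ((k : ℝ) + α) s * (-1)^s)) *
       (((1-t)/2)^((s:ℝ)+i+α) * ((1+t)/2)^(((k-s:ℕ):ℝ)+α)) := by
    refine intervalIntegral.integral_congr_ae ?_
    have h0 : ∀ᵐ t : ℝ, t ≠ 1 := by simp [ae_iff]
    filter_upwards [h0] with t ht1 ht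
    rw [Set.uIoc_of_le (by norm_num)] at ht
    have ht' : t ∈ Set.Icc (-1:ℝ) 1 := ⟨ht.1.le, ht.2⟩
    have h1 : 0 < (1-t)/2 := by linarith [lt_of_le_of_ne ht.2 ht1]
    have h2 : 0 < (1+t)/2 := by linarith [ht.1]
    rw [weight_eq α t ht', jacPoly_eval, jacobiP, Finset.sum_mul, Finset.sum_mul]
    refine Finset.sum_congr rfl fun s _ => ?_
    rw [rpow_add h1, rpow_add h1, rpow_add h2, rpow_natCast, rpow_natCast, rpow_natCast]
    have : (t - 1)/2 = (-1) * ((1-t)/2) := by ring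
    rw [this, mul_pow, show (t+1)/2 = (1+t)/2 by ring]
    ring
  rw [h1, intervalIntegral.integral_finsetSum]
  swap
  · intro s _
    refine (Continuous.intervalIntegrable ?_ _ _)
    exact continuous_const.mul (cont_pow _ (by positivity) _ (by positivity))
  have hterm : ∀ s ∈ Finset.range (k+1), ∫ t in (-1:ℝ)..1,
     (4 ^ α * (genBinom ((k : ℝ) + α) (k - s) * genBinom ((k : ℝ) + α) s * (-1)^s)) *
       (((1-t)/2)^((s:ℝ)+i+α) * ((1+t)/2)^(((k-s:ℕ):ℝ)+α)) =
      (4 ^ α * 2 * Gamma (k+α+1)^2 / (Nat.factorial k) / Gamma (k + i + 2*α+2)) *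
        ((-1:ℝ)^s * (k.choose s) * ((ascPochhammer ℝ i).comp (Polynomial.X + Polynomial.C (α+1))).eval (s:ℝ)) := by
    intro s hs
    have hs' : s ≤ k := by simpa [Nat.lt_succ_iff] using hs
    rw [intervalIntegral.integral_const_mul, real_beta' _ _ (by positivity) (by positivity)]
    have hsk : (s:ℝ) ≤ k := by exact_mod_cast hs'
    have g1 := genBinom_Gamma (k+α) (k-s) (by rw [Nat.cast_sub hs']; linarith [Nat.cast_nonneg (α := ℝ) s])
    have g2 := genBinom_Gamma (k+α) s (by linarith)
    have g3 := Gamma_asc (s+α+1) (by positivity) i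
    rw [Nat.cast_sub hs'] at g1 ⊢
    rw [show (k:ℝ)+α-(k-s)+1 = s+α+1 by ring] at g1
    rw [show (k:ℝ)+α-s+1 = k-s+α+1 by ring] at g2
    rw [show (s:ℝ)+i+α+1 = s+α+1+i by ring, g3]
    rw [show (s:ℝ)+i+α+(k-s+α)+2 = k+i+2*α+2 by ring]
    have hc := Nat.choose_mul_factorial_mul_factorial hs'
    have hc' : (k.choose s : ℝ) * (Nat.factorial s) * (Nat.factorial (k-s)) = Nat.factorial k := by
      exact_mod_cast hc
    simp only [Polynomial.eval_comp, Polynomial.eval_add, Polynomial.eval_X, Polynomial.eval_C]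
    rw [← add_assoc]
    have hG : Gamma ((k:ℝ)+i+2*α+2) ≠ 0 := (Gamma_pos_of_pos (by positivity)).ne'
    have hfk : (Nat.factorial k : ℝ) ≠ 0 := by positivity
    have hfs : (Nat.factorial s : ℝ) ≠ 0 := by positivity
    have hfks : (Nat.factorial (k-s) : ℝ) ≠ 0 := by positivity
    have e1 : genBinom (k+α) (k-s) * Gamma (s+α+1) = Gamma (k+α+1) / (Nat.factorial (k-s)) := by
      rw [← g1]; field_simp
    have e2 : genBinom (k+α) s * Gamma (k-s+α+1) = Gamma (k+α+1) / (Nat.factorial s) := by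
      rw [← g2]; field_simp
    have e3 : (k.choose s : ℝ) = Nat.factorial k / ((Nat.factorial s) * (Nat.factorial (k-s))) := by
      rw [← hc']; field_simp
    calc _ = 4^α * 2 * (genBinom (k+α) (k-s) * Gamma (s+α+1)) * (genBinom (k+α) s * Gamma (k-s+α+1))
          * (-1)^s * (ascPochhammer ℝ i).eval (s+α+1) / Gamma ((k:ℝ)+i+2*α+2) := by ring
      _ = _ := by
        rw [e1, e2, e3]
        field_simp
  rw [Finset.sum_congr rfl hterm, ← Finset.mul_sum, alt_sum_poly, mul_zero]
  rw [Polynomial.natDegree_comp, ascPochhammer_natDegree, Polynomial.natDegree_X_add_C]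
  omega

lemma cont_weight (α : ℝ) (hα : 0 ≤ α) : Continuous fun t : ℝ => (1 - t^2)^α :=
  Continuous.rpow_const (by fun_prop) fun _ => Or.inr hα

lemma jac_orth (α : ℝ) (hα : 0 ≤ α) (k : ℕ) (p : Polynomial ℝ) (hp : p.degree < k) :
    ∫ t in (-1:ℝ)..1, (jacPoly α k).eval t * p.eval t * (1 - t^2) ^ α = 0 := by
  set q := p.comp (1 - Polynomial.C 2 * Polynomial.X) with hq
  have hpq : ∀ t : ℝ, p.eval t = q.eval ((1-t)/2) := by
    intro t
    simp only [hq, Polynomial.eval_comp]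
    congr 1
    simp; ring
  have hdeg : p = 0 ∨ q.natDegree < k := by
    by_cases h : p = 0
    · exact Or.inl h
    · right
      have h1 : p.natDegree < k := (Polynomial.natDegree_lt_iff_degree_lt h).2 hp
      refine lt_of_le_of_lt Polynomial.natDegree_comp_le ?_
      have : (1 - Polynomial.C 2 * Polynomial.X : Polynomial ℝ).natDegree ≤ 1 := by compute_degree
      nlinarith
  rcases hdeg with h | h
  · simp [h]
  · have : ∀ t : ℝ, (jacPoly α k).eval t * p.eval t * (1 - t^2) ^ α =
      ∑ i ∈ Finset.range k, q.coeff i * ((jacPoly α k).eval t * ((1-t)/2)^i * (1 - t^2) ^ α) := by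
      intro t
      rw [hpq, Polynomial.eval_eq_sum_range' h, Finset.mul_sum, Finset.sum_mul]
      refine Finset.sum_congr rfl fun s _ => by ring
    simp only [this]
    rw [intervalIntegral.integral_finsetSum]
    · refine Finset.sum_eq_zero fun i hi => ?_
      rw [intervalIntegral.integral_const_mul, jac_orth_mono α hα k i (Finset.mem_range.1 hi), mul_zero]
    · intro i _
      refine Continuous.intervalIntegrable ?_ _ _
      have := cont_weight α hα
      fun_prop

lemma weight_pos (α : ℝ) (hα : 0 ≤ α) (p : Polynomial ℝ) (hp : p ≠ 0) :
    0 < ∫ t in (-1:ℝ)..1, p.eval t * p.eval t * (1 - t^2) ^ α := by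
  have hc := cont_weight α hα
  refine intervalIntegral.integral_pos (by norm_num) (by fun_prop) ?_ ?_
  · intro t ht
    have : 0 ≤ 1 - t^2 := by nlinarith [ht.1, ht.2]
    have := rpow_nonneg this α
    nlinarith [mul_self_nonneg (p.eval t)]
  · have hinf : (Set.Ioo (-1:ℝ) 1).Infinite := Set.Ioo_infinite (by norm_num)
    obtain ⟨c, hc1, hc2⟩ := hinf.exists_notMem_finset p.roots.toFinset
    refine ⟨c, Set.Ioo_subset_Icc_self hc1, ?_⟩
    have h0 : p.eval c ≠ 0 := by simpa [hp] using hc2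
    have : 0 < 1 - c^2 := by nlinarith [hc1.1, hc1.2]
    have := rpow_pos_of_pos this α
    have := mul_self_pos.2 h0
    positivity


lemma iso_pair {n : ℕ} (hn : 2 ≤ n) (x y x₂ y₂ : EuclideanSpace ℝ (Fin n)) (hx : ‖x‖ = 1)
    (hy : ‖y‖ = 1) (hx₂ : ‖x₂‖ = 1) (hy₂ : ‖y₂‖ = 1) (h : ⟪x, y⟫ = ⟪x₂, y₂⟫) :
    ∃ A : EuclideanSpace ℝ (Fin n) ≃ₗᵢ[ℝ] EuclideanSpace ℝ (Fin n), A x = x₂ ∧ A y = y₂ := by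
  obtain ⟨b, hb, hb'⟩ := exists_basis_pair hn x y hx hy
  obtain ⟨c, hc, hc'⟩ := exists_basis_pair hn x₂ y₂ hx₂ hy₂
  have hA : ∀ i, (b.repr.trans c.repr.symm) (b i) = c i := by intro i; simp
  refine ⟨b.repr.trans c.repr.symm, ?_, ?_⟩
  · rw [← hb, hA, hc]
  · rw [hb', map_add, map_smul, map_smul, hA, hA, h, ← hc']

namespace GoodMeas
variable {n : ℕ} {σ : Measure (EuclideanSpace ℝ (Fin n))}

lemma integral_iso (hσ : GoodMeas n σ)
    (A : EuclideanSpace ℝ (Fin n) ≃ₗᵢ[ℝ] EuclideanSpace ℝ (Fin n))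
    (f : EuclideanSpace ℝ (Fin n) → ℝ) : ∫ e, f (A e) ∂σ = ∫ e, f e ∂σ := by
  conv_rhs => rw [← hσ.inv A]
  exact (integral_map_equiv A.toHomeomorph.toMeasurableEquiv f).symm

lemma ae_ball (hσ : GoodMeas n σ) : ∀ᵐ e ∂σ, e ∈ Metric.closedBall (0:EuclideanSpace ℝ (Fin n)) 1 := by
  filter_upwards [hσ.norm] with e he
  simp [he]

lemma integrable (hσ : GoodMeas n σ) {f : EuclideanSpace ℝ (Fin n) → ℝ} (hf : Continuous f) :
    Integrable f σ := by
  have := hσ.prob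
  rw [← Measure.restrict_eq_self_of_ae_mem hσ.ae_ball]
  exact hf.continuousOn.integrableOn_compact (isCompact_closedBall _ _)

lemma ae_prod (hσ : GoodMeas n σ) : ∀ᵐ p ∂(σ.prod σ), ‖p.1‖ = 1 ∧ ‖p.2‖ = 1 := by
  have := hσ.prob
  have h1 := Measure.quasiMeasurePreserving_fst (μ := σ) (ν := σ) |>.ae hσ.norm
  have h2 := Measure.quasiMeasurePreserving_snd (μ := σ) (ν := σ) |>.ae hσ.norm
  filter_upwards [h1, h2] with p h1 h2 using ⟨h1, h2⟩

lemma integrable_prod (hσ : GoodMeas n σ)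
    {f : EuclideanSpace ℝ (Fin n) × EuclideanSpace ℝ (Fin n) → ℝ} (hf : Continuous f) :
    Integrable f (σ.prod σ) := by
  have := hσ.prob
  have h : ∀ᵐ p ∂(σ.prod σ), p ∈ Metric.closedBall (0:EuclideanSpace ℝ (Fin n)) 1 ×ˢ
      Metric.closedBall (0:EuclideanSpace ℝ (Fin n)) 1 := by
    filter_upwards [hσ.ae_prod] with p hp
    simp [hp.1, hp.2]
  rw [← Measure.restrict_eq_self_of_ae_mem h]
  exact hf.continuousOn.integrableOn_compact
    ((isCompact_closedBall _ _).prod (isCompact_closedBall _ _))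

lemma law_cont (hσ : GoodMeas n σ) : ∃ C : ℝ, 0 < C ∧ ∀ x : EuclideanSpace ℝ (Fin n), ‖x‖ = 1 →
    ∀ f : ℝ → ℝ, Continuous f →
    ∫ e, f ⟪x, e⟫ ∂σ = C * ∫ t in (-1:ℝ)..1, f t * (1 - t^2) ^ (((n:ℝ) - 3)/2) := by
  obtain ⟨C, hC, h⟩ := hσ.law
  refine ⟨C, hC, fun x hx f hf => ?_⟩
  obtain ⟨B, hB⟩ := isCompact_Icc.exists_bound_of_continuousOn (s := Set.Icc (-1:ℝ) 1) hf.continuousOn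
  exact h x hx f hf.measurable B hB

lemma avg (hσ : GoodMeas n σ) (hn : 3 ≤ n) (x x' : EuclideanSpace ℝ (Fin n)) (hx : ‖x‖ = 1)
    (hx' : ‖x'‖ = 1) (h0 : ⟪x, x'⟫ = 0) (i : ℕ) :
    ∃ M : Polynomial ℝ, M.natDegree ≤ i ∧ M.eval 1 = (if i = 0 then 1 else 0) ∧
      ∀ φ : Polynomial ℝ, ∫ e, φ.eval ⟪x, e⟫ * ⟪x', e⟫ ^ i ∂σ =
        ∫ e, φ.eval ⟪x, e⟫ * M.eval ⟪x, e⟫ ∂σ := by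
  have := hσ.prob
  have hn2 : 2 ≤ n := by omega
  by_cases hi0 : i = 0
  · subst hi0
    exact ⟨1, by simp, by simp, fun φ => by simp⟩
  rw [if_neg hi0]
  rcases Nat.even_or_odd' i with ⟨l, rfl | rfl⟩
  swap
  · refine ⟨0, by simp, by simp, fun φ => ?_⟩
    obtain ⟨A, hA1, hA2⟩ := iso_pair hn2 x x' x (-x') hx hx' hx (by simpa using hx') (by simp [h0])
    have h := hσ.integral_iso A (fun e => φ.eval ⟪x, e⟫ * ⟪x', e⟫ ^ (2*l+1))
    have e1 : ∀ e, ⟪x, A e⟫ = ⟪x, e⟫ := fun e => by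
      conv_lhs => rw [← hA1]
      rw [A.inner_map_map]
    have e2 : ∀ e, ⟪x', A e⟫ = - ⟪x', e⟫ := fun e => by
      have : x' = A (-x') := by rw [map_neg, hA2, neg_neg]
      conv_lhs => rw [this]
      rw [A.inner_map_map, inner_neg_left]
    simp only [e1, e2] at h
    have : ∀ e, φ.eval ⟪x, e⟫ * (- ⟪x', e⟫) ^ (2*l+1) = - (φ.eval ⟪x, e⟫ * ⟪x', e⟫ ^ (2*l+1)) := by
      intro e; rw [Odd.neg_pow ⟨l, rfl⟩]; ring
    simp only [this, integral_neg] at h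
    simp
    linarith
  have hl : l ≠ 0 := by omega
  set D := ∫ v, (1 - ⟪x, v⟫^2)^l ∂σ with hD
  set κ := ∫ v, ⟪x, v⟫^(2*l) ∂σ with hκ
  have hDpos : 0 < D := by
    obtain ⟨C, hC, h⟩ := hσ.law_cont
    rw [hD, h x hx (fun t => (1 - t^2)^l) (by fun_prop)]
    refine mul_pos hC ?_
    have hα : 0 ≤ ((n:ℝ)-3)/2 := by
      have : (3:ℝ) ≤ n := by exact_mod_cast hn
      linarith
    have := cont_weight _ hα
    refine intervalIntegral.integral_pos (by norm_num) (by fun_prop) ?_ ⟨0, by simp, by simp⟩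
    intro t ht
    have : 0 ≤ 1 - t^2 := by nlinarith [ht.1, ht.2]
    positivity
  refine ⟨Polynomial.C (κ/D) * (1 - Polynomial.X^2)^l, ?_, ?_, ?_⟩
  · compute_degree
    omega
  · simp [hl]
  intro φ
  set J := ∫ e, φ.eval ⟪x, e⟫ * ⟪x', e⟫ ^ (2*l) ∂σ with hJ
  have hφ : Continuous fun t : ℝ => φ.eval t := φ.continuous
  have hsq : ∀ t : EuclideanSpace ℝ (Fin n), ‖t‖ = 1 → 0 ≤ 1 - ⟪x, t⟫^2 := by
    intro t ht
    have := abs_real_inner_le_norm x t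
    rw [hx, ht, mul_one, ← sq_le_one_iff_abs_le_one] at this
    linarith
  have hv : ∀ v, ‖v‖ = 1 → ∫ e, φ.eval ⟪x, e⟫ * (⟪v, e⟫ - ⟪x, v⟫ * ⟪x, e⟫)^(2*l) ∂σ =
      (1 - ⟪x, v⟫^2)^l * J := by
    intro v hv
    obtain ⟨b, hb0, hb1⟩ := exists_basis_pair hn2 x v hx hv
    set b1 := b ⟨1, by omega⟩ with hb1'
    have hb1n : ‖b1‖ = 1 := b.orthonormal.1 _
    have horth : ⟪x, b1⟫ = 0 := by
      rw [← hb0]; exact b.orthonormal.2 (by simp)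
    obtain ⟨A, hA1, hA2⟩ := iso_pair hn2 x x' x b1 hx hx' hx hb1n (by rw [h0, horth])
    have h := hσ.integral_iso A (fun e => φ.eval ⟪x, e⟫ * ⟪b1, e⟫ ^ (2*l))
    have e1 : ∀ e, ⟪x, A e⟫ = ⟪x, e⟫ := fun e => by
      conv_lhs => rw [← hA1]
      rw [A.inner_map_map]
    have e2 : ∀ e, ⟪b1, A e⟫ = ⟪x', e⟫ := fun e => by
      rw [← hA2, A.inner_map_map]
    simp only [e1, e2] at h
    rw [hJ, h, ← integral_const_mul]
    congr 1
    ext e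
    have e3 : ⟪v, e⟫ - ⟪x, v⟫ * ⟪x, e⟫ = √(1 - ⟪x, v⟫^2) * ⟪b1, e⟫ := by
      conv_lhs => enter [1]; rw [hb1]
      rw [hb0, inner_add_left, inner_smul_left, inner_smul_left]
      simp
    rw [e3, mul_pow, pow_mul, sq_sqrt (hsq v hv)]
    ring
  have he : ∀ e, ‖e‖ = 1 → ∫ v, φ.eval ⟪x, e⟫ * (⟪v, e⟫ - ⟪x, v⟫ * ⟪x, e⟫)^(2*l) ∂σ =
      κ * (φ.eval ⟪x, e⟫ * (1 - ⟪x, e⟫^2)^l) := by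
    intro e he
    obtain ⟨b, hb0, hb1⟩ := exists_basis_pair hn2 x e hx he
    set b1 := b ⟨1, by omega⟩ with hb1'
    have hb1n : ‖b1‖ = 1 := b.orthonormal.1 _
    obtain ⟨A, hA1, hA2⟩ := iso_pair hn2 x x b1 b1 hx hx hb1n hb1n (by
      rw [real_inner_self_eq_norm_sq, real_inner_self_eq_norm_sq, hx, hb1n])
    have h := hσ.integral_iso A (fun v => ⟪b1, v⟫ ^ (2*l))
    have e2 : ∀ e, ⟪b1, A e⟫ = ⟪x, e⟫ := fun e => by
      rw [← hA2, A.inner_map_map]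
    simp only [e2] at h
    rw [hκ, h, mul_comm (∫ v, ⟪b1, v⟫ ^ (2*l) ∂σ), ← integral_const_mul]
    congr 1
    ext v
    have e3 : ⟪v, e⟫ - ⟪x, v⟫ * ⟪x, e⟫ = √(1 - ⟪x, e⟫^2) * ⟪b1, v⟫ := by
      conv_lhs => enter [1]; rw [hb1]
      rw [hb0, inner_add_right, inner_smul_right, inner_smul_right, real_inner_comm x v,
        real_inner_comm b1 v]
      ring
    rw [e3, mul_pow, pow_mul, sq_sqrt (hsq e he)]
    ring
  have hfub := integral_integral_swap (μ := σ) (ν := σ)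
    (f := fun v e => φ.eval ⟪x, e⟫ * (⟪v, e⟫ - ⟪x, v⟫ * ⟪x, e⟫)^(2*l))
    (hσ.integrable_prod (by
      simp only [Function.uncurry_def]
      have : Continuous fun p : EuclideanSpace ℝ (Fin n) × EuclideanSpace ℝ (Fin n) =>
        φ.eval ⟪x, p.2⟫ := hφ.comp (by fun_prop)
      fun_prop))
  have hL : ∫ v, ∫ e, φ.eval ⟪x, e⟫ * (⟪v, e⟫ - ⟪x, v⟫ * ⟪x, e⟫)^(2*l) ∂σ ∂σ = D * J := by
    rw [hD, ← integral_mul_const]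
    refine integral_congr_ae ?_
    filter_upwards [hσ.norm] with v hvn using hv v hvn
  have hR : ∫ e, ∫ v, φ.eval ⟪x, e⟫ * (⟪v, e⟫ - ⟪x, v⟫ * ⟪x, e⟫)^(2*l) ∂σ ∂σ =
      κ * ∫ e, φ.eval ⟪x, e⟫ * (1 - ⟪x, e⟫^2)^l ∂σ := by
    rw [← integral_const_mul]
    refine integral_congr_ae ?_
    filter_upwards [hσ.norm] with e hen using he e hen
  rw [hL, hR] at hfub
  have : J = (κ / D) * ∫ e, φ.eval ⟪x, e⟫ * (1 - ⟪x, e⟫^2)^l ∂σ := by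
    field_simp
    linarith
  rw [this, ← integral_const_mul]
  congr 1
  ext e
  simp
  ring

lemma integrable_poly (hσ : GoodMeas n σ) (x y : EuclideanSpace ℝ (Fin n)) (φ ψ : Polynomial ℝ) :
    Integrable (fun e => φ.eval ⟪x, e⟫ * ψ.eval ⟪y, e⟫) σ := by
  refine hσ.integrable ?_
  exact (φ.continuous.comp (by fun_prop)).mul (ψ.continuous.comp (by fun_prop))

lemma transfer_mono (hσ : GoodMeas n σ) (hn : 3 ≤ n) (x y : EuclideanSpace ℝ (Fin n)) (hx : ‖x‖ = 1)
    (hy : ‖y‖ = 1) (j : ℕ) :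
    ∃ Q : Polynomial ℝ, Q.natDegree ≤ j ∧ Q.eval 1 = ⟪x, y⟫ ^ j ∧
      ∀ φ : Polynomial ℝ, ∫ e, φ.eval ⟪x, e⟫ * ⟪y, e⟫ ^ j ∂σ =
        ∫ e, φ.eval ⟪x, e⟫ * Q.eval ⟪x, e⟫ ∂σ := by
  obtain ⟨b, hb0, hb1⟩ := exists_basis_pair (by omega) x y hx hy
  set x' := b ⟨1, by omega⟩ with hb1'
  have hx'n : ‖x'‖ = 1 := b.orthonormal.1 _
  have horth : ⟪x, x'⟫ = 0 := by
    rw [← hb0]; exact b.orthonormal.2 (by simp)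
  set s := ⟪x, y⟫ with hs
  set r := √(1 - s^2) with hr
  have hye : ∀ e, ⟪y, e⟫ = r * ⟪x', e⟫ + s * ⟪x, e⟫ := by
    intro e
    rw [hb1, hb0, inner_add_left, inner_smul_left, inner_smul_left]
    simp
    ring
  choose M hM1 hM2 hM3 using hσ.avg hn x x' hx hx'n horth
  refine ⟨∑ m ∈ Finset.range (j+1), Polynomial.C (r^m * s^(j-m) * (j.choose m)) *
    Polynomial.X^(j-m) * M m, ?_, ?_, ?_⟩
  · refine Polynomial.natDegree_sum_le_of_forall_le _ _ ?_
    intro m hm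
    have hm' : m ≤ j := by simpa [Nat.lt_succ_iff] using hm
    have := hM1 m
    refine Polynomial.natDegree_mul_le.trans ?_
    have : (Polynomial.C (r^m * s^(j-m) * (j.choose m)) * Polynomial.X^(j-m)).natDegree ≤ j - m := by
      compute_degree
    omega
  · rw [Polynomial.eval_finsetSum, Finset.sum_eq_single 0]
    · simp [hM2]
    · intro m _ hm
      simp [hM2, hm]
    · simp
  · intro φ
    have e1 : ∀ e, φ.eval ⟪x, e⟫ * ⟪y, e⟫ ^ j = ∑ m ∈ Finset.range (j+1),
        (φ * (Polynomial.C (r^m * s^(j-m) * (j.choose m)) *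
    Polynomial.X^(j-m))).eval ⟪x, e⟫ * ⟪x', e⟫^m := by
      intro e
      rw [hye, add_pow, Finset.mul_sum]
      refine Finset.sum_congr rfl fun m _ => ?_
      simp
      ring
    have e2 : ∀ e, φ.eval ⟪x, e⟫ * (∑ m ∈ Finset.range (j+1), Polynomial.C (r^m * s^(j-m) * (j.choose m)) *
    Polynomial.X^(j-m) * M m).eval ⟪x, e⟫ = ∑ m ∈ Finset.range (j+1),
        (φ * (Polynomial.C (r^m * s^(j-m) * (j.choose m)) *
    Polynomial.X^(j-m))).eval ⟪x, e⟫ * (M m).eval ⟪x, e⟫ := by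
      intro e
      rw [Polynomial.eval_finsetSum, Finset.mul_sum]
      refine Finset.sum_congr rfl fun m _ => ?_
      simp
      ring
    simp only [e1, e2]
    rw [integral_finsetSum, integral_finsetSum]
    · exact Finset.sum_congr rfl fun m _ => hM3 m _
    · intro m _
      exact hσ.integrable_poly _ _ _ _
    · intro m _
      have := hσ.integrable_poly x x' (φ * (Polynomial.C (r^m * s^(j-m) * (j.choose m)) *
        Polynomial.X^(j-m))) (Polynomial.X^m)
      simpa using this

lemma transfer (hσ : GoodMeas n σ) (hn : 3 ≤ n) (x y : EuclideanSpace ℝ (Fin n)) (hx : ‖x‖ = 1)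
    (hy : ‖y‖ = 1) (f : Polynomial ℝ) (d : ℕ) (hd : f.degree < d) :
    ∃ Q : Polynomial ℝ, Q.degree < d ∧ Q.eval 1 = f.eval ⟪x, y⟫ ∧
      ∀ φ : Polynomial ℝ, ∫ e, φ.eval ⟪x, e⟫ * f.eval ⟪y, e⟫ ∂σ =
        ∫ e, φ.eval ⟪x, e⟫ * Q.eval ⟪x, e⟫ ∂σ := by
  choose Q hQ1 hQ2 hQ3 using hσ.transfer_mono hn x y hx hy
  have hf : ∀ t : ℝ, f.eval t = ∑ j ∈ f.support, f.coeff j * t^j := fun t => by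
    rw [Polynomial.eval_eq_sum, Polynomial.sum]
  refine ⟨∑ j ∈ f.support, Polynomial.C (f.coeff j) * Q j, ?_, ?_, ?_⟩
  · rw [← Polynomial.mem_degreeLT]
    refine Submodule.sum_mem _ fun j hj => ?_
    rw [← Polynomial.smul_eq_C_mul]
    refine Submodule.smul_mem _ _ ?_
    rw [Polynomial.mem_degreeLT]
    have h1 : (j : WithBot ℕ) < d := lt_of_le_of_lt (Polynomial.le_degree_of_mem_supp j hj) hd
    exact lt_of_le_of_lt (Polynomial.degree_le_of_natDegree_le (hQ1 j)) h1
  · simp [Polynomial.eval_finsetSum, hQ2, hf]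
  · intro φ
    simp only [hf, Polynomial.eval_finsetSum, Finset.mul_sum, Polynomial.eval_mul, Polynomial.eval_C]
    rw [integral_finsetSum, integral_finsetSum]
    · refine Finset.sum_congr rfl fun j _ => ?_
      have := hQ3 j φ
      simp only [mul_left_comm _ (f.coeff j)]
      rw [integral_const_mul, integral_const_mul, this]
    · intro j _
      simp only [mul_left_comm _ (f.coeff j)]
      exact (hσ.integrable_poly _ _ _ _).const_mul _
    · intro j _
      simp only [mul_left_comm _ (f.coeff j)]
      have := hσ.integrable_poly x y φ (Polynomial.X^j)
      simp only [Polynomial.eval_pow, Polynomial.eval_X] at this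
      exact this.const_mul _

lemma key (hσ : GoodMeas n σ) (hn : 3 ≤ n) (k : ℕ) :
    ∃ c : ℝ, 0 < c ∧ ∀ x y : EuclideanSpace ℝ (Fin n), ‖x‖ = 1 → ‖y‖ = 1 →
      ∫ e, (jacPoly (((n:ℝ)-3)/2) k).eval ⟪x, e⟫ * (jacPoly (((n:ℝ)-3)/2) k).eval ⟪y, e⟫ ∂σ =
        c * (jacPoly (((n:ℝ)-3)/2) k).eval ⟪x, y⟫ := by
  have hα : 0 ≤ ((n:ℝ)-3)/2 := by
    have : (3:ℝ) ≤ n := by exact_mod_cast hn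
    linarith
  obtain ⟨C, hC, hlaw⟩ := hσ.law_cont
  have hP1 := jacPoly_one _ hα k
  have hPd := jacPoly_degree (((n:ℝ)-3)/2) k
  have horth := jac_orth _ hα k
  set α := ((n:ℝ)-3)/2 with hαdef
  set P := jacPoly α k with hP
  have hP0 : P ≠ 0 := by rintro h; rw [h] at hP1; simp at hP1
  have hlawp : ∀ x : EuclideanSpace ℝ (Fin n), ‖x‖ = 1 → ∀ p q : Polynomial ℝ,
      ∫ e, p.eval ⟪x, e⟫ * q.eval ⟪x, e⟫ ∂σ =
        C * ∫ t in (-1:ℝ)..1, p.eval t * q.eval t * (1 - t^2) ^ α := fun x hx p q =>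
    hlaw x hx (fun t => p.eval t * q.eval t) (p.continuous.mul q.continuous)
  have hlt : ∀ p : Polynomial ℝ, p.degree < (k+1 : ℕ) → p.coeff k = 0 → p.degree < k := by
    intro p hp h0
    rw [Polynomial.degree_lt_iff_coeff_zero] at hp ⊢
    intro m hm
    rcases Nat.eq_or_lt_of_le hm with h | h
    · rw [← h, h0]
    · exact hp m h
  have hPd' : P.degree < (k+1 : ℕ) := lt_of_le_of_lt (Polynomial.degree_le_of_natDegree_le hPd)
    (by exact_mod_cast Nat.lt_succ_self k)
  have hpos := weight_pos α hα P hP0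
  have hpk : P.coeff k ≠ 0 := by
    intro h
    have := horth P (hlt P hPd' h)
    linarith
  refine ⟨C * (∫ t in (-1:ℝ)..1, P.eval t * P.eval t * (1 - t^2) ^ α) / P.eval 1, by positivity, ?_⟩
  intro x y hx hy
  obtain ⟨Q, hQ1, hQ2, hQ3⟩ := hσ.transfer hn x y hx hy P (k+1) hPd'
  have hQorth : ∀ h : Polynomial ℝ, h.degree < k → ∫ t in (-1:ℝ)..1, h.eval t * Q.eval t * (1 - t^2) ^ α = 0 := by
    intro h hh
    obtain ⟨Qh, hQh1, -, hQh3⟩ := hσ.transfer hn y x hy hx h k hh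
    have h1 := hQ3 h
    have h2 := hQh3 P
    rw [hlawp y hy, horth Qh hQh1] at h2
    rw [hlawp x hx] at h1
    have h3 : ∫ e, h.eval ⟪x, e⟫ * P.eval ⟪y, e⟫ ∂σ = ∫ e, P.eval ⟪y, e⟫ * h.eval ⟪x, e⟫ ∂σ := by
      congr 1; ext e; ring
    rw [h3, h2, mul_zero] at h1
    rcases mul_eq_zero.1 h1.symm with h | h
    · exact absurd h hC.ne'
    · exact h
  set R := Polynomial.C (P.coeff k) * Q - Polynomial.C (Q.coeff k) * P with hR
  have hRd : R.degree < k := by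
    refine hlt R ?_ ?_
    · rw [← Polynomial.mem_degreeLT] at hQ1 hPd' ⊢
      rw [hR, ← Polynomial.smul_eq_C_mul, ← Polynomial.smul_eq_C_mul]
      exact Submodule.sub_mem _ (Submodule.smul_mem _ _ hQ1) (Submodule.smul_mem _ _ hPd')
    · simp [hR, mul_comm]
  have hw := cont_weight α hα
  have hI : ∀ p q : Polynomial ℝ, IntervalIntegrable
      (fun t => p.eval t * q.eval t * (1 - t^2) ^ α) volume (-1) 1 := by
    intro p q
    refine Continuous.intervalIntegrable ?_ _ _
    exact (p.continuous.mul q.continuous).mul hw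
  have hR0 : R = 0 := by
    by_contra hne
    have h1 := weight_pos α hα R hne
    have h2 : ∀ t : ℝ, R.eval t * R.eval t * (1 - t^2) ^ α =
      P.coeff k * (R.eval t * Q.eval t * (1 - t^2) ^ α) -
        Q.coeff k * (P.eval t * R.eval t * (1 - t^2) ^ α) := by
      intro t
      have : R.eval t = P.coeff k * Q.eval t - Q.coeff k * P.eval t := by simp [hR]
      conv_lhs => enter [1, 2]; rw [this]
      ring
    simp only [h2] at h1
    rw [intervalIntegral.integral_sub ((hI _ _).const_mul _) ((hI _ _).const_mul _),
      intervalIntegral.integral_const_mul, intervalIntegral.integral_const_mul,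
      hQorth R hRd, horth R hRd] at h1
    simp at h1
  have hQ : ∀ t, Q.eval t = Q.coeff k / P.coeff k * P.eval t := by
    intro t
    have : R.eval t = P.coeff k * Q.eval t - Q.coeff k * P.eval t := by simp [hR]
    rw [hR0, Polynomial.eval_zero] at this
    field_simp
    linarith
  have h1 := hQ 1
  rw [hQ2] at h1
  rw [hQ3 P, hlawp x hx, h1]
  have h2 : ∀ t : ℝ, P.eval t * Q.eval t * (1 - t^2) ^ α =
    Q.coeff k / P.coeff k * (P.eval t * P.eval t * (1 - t^2) ^ α) := by
    intro t; rw [hQ t]; ring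
  simp only [h2]
  rw [intervalIntegral.integral_const_mul]
  field_simp

end GoodMeas


lemma psd_integral {Ω : Type*} [MeasurableSpace Ω] (σ : Measure Ω) [IsProbabilityMeasure σ]
    (K : Ω × Ω → ℝ) (hK : Measurable K) (B : ℝ) (hB : ∀ p, |K p| ≤ B)
    (h : ∀ (M : ℕ) (ω : Fin M → Ω), 0 ≤ ∑ i, ∑ j, K (ω i, ω j)) :
    0 ≤ ∫ p, K p ∂(σ.prod σ) := by
  set I := ∫ p, K p ∂(σ.prod σ) with hI
  have key : ∀ M : ℕ, 0 ≤ (M:ℝ) * (B + (M - 1) * I) := by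
    intro M
    let P := Measure.pi (fun _ : Fin M => σ)
    have hm : ∀ i j : Fin M, Measurable (fun ω : Fin M → Ω => K (ω i, ω j)) := by
      intro i j; fun_prop
    have hintg : ∀ i j : Fin M, Integrable (fun ω : Fin M → Ω => K (ω i, ω j)) P := by
      intro i j
      exact Integrable.of_bound (hm i j).aestronglyMeasurable B (Eventually.of_forall fun ω => hB _)
    have h0 : 0 ≤ ∫ ω, ∑ i, ∑ j, K (ω i, ω j) ∂P := integral_nonneg fun ω => h M ω
    rw [integral_finsetSum _ (fun i _ => integrable_finsetSum _ fun j _ => hintg i j)] at h0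
    have hind := ProbabilityTheory.iIndepFun_pi (μ := fun _ : Fin M => σ)
      (X := fun _ => (id : Ω → Ω)) (fun _ => aemeasurable_id)
    have hmap : ∀ i : Fin M, Measure.map (fun ω : Fin M → Ω => ω i) P = σ := fun i =>
      (measurePreserving_eval (fun _ : Fin M => σ) i).map_eq
    have hle : ∀ i j : Fin M, ∫ ω, K (ω i, ω j) ∂P ≤ I + (if i = j then B - I else 0) := by
      intro i j
      split_ifs with hij
      · have := integral_mono (hintg i j) (integrable_const B) (fun ω => le_of_abs_le (hB _))
        simpa [P] using this
      · have h2 : ProbabilityTheory.IndepFun (fun ω : Fin M → Ω => ω i) (fun ω => ω j)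
            (Measure.pi fun _ : Fin M => σ) := hind.indepFun hij
        rw [ProbabilityTheory.indepFun_iff_map_prod_eq_prod_map_map (measurable_pi_apply i).aemeasurable
          (measurable_pi_apply j).aemeasurable] at h2
        change Measure.map (fun ω : Fin M → Ω => (ω i, ω j)) P = _ at h2
        have e : (∫ ω, K (ω i, ω j) ∂P) = I := by
          rw [hI, ← integral_map (f := K) (φ := fun ω : Fin M → Ω => (ω i, ω j)) (by fun_prop) hK.aestronglyMeasurable, h2]
          erw [hmap, hmap]
        rw [e, add_zero]
    refine h0.trans ?_
    calc _ ≤ ∑ i : Fin M, ∑ j : Fin M, (I + (if i = j then B - I else 0)) := by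
          refine Finset.sum_le_sum fun i _ => ?_
          rw [integral_finsetSum _ fun j _ => hintg i j]
          exact Finset.sum_le_sum fun j _ => hle i j
      _ = _ := by
          simp [Finset.sum_add_distrib]
          ring
  by_contra hneg
  push Not at hneg
  obtain ⟨M, hM⟩ := exists_nat_gt (B / (-I) + 1)
  have hB0 : 0 ≤ B / (-I) := by
    have : 0 ≤ B := by
      obtain ⟨ω⟩ := nonempty_of_isProbabilityMeasure σ
      exact (abs_nonneg _).trans (hB (ω, ω))
    exact div_nonneg this (by linarith)
  have h1 := key M
  have hMpos : (0:ℝ) < M := by linarith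
  have h2 := nonneg_of_mul_nonneg_right h1 hMpos
  have h3 : B / (-I) < M - 1 := by linarith
  rw [div_lt_iff₀ (by linarith)] at h3
  linarith


lemma continuous_resid {n m : ℕ} :
    Continuous (fun p : (Fin m → EuclideanSpace ℝ (Fin n)) × EuclideanSpace ℝ (Fin n) =>
      p.2 - ∑ i, ⟪p.2, p.1 i⟫ • p.1 i) := by
  fun_prop

lemma measurable_projC {n m : ℕ} :
    Measurable (fun p : (Fin m → EuclideanSpace ℝ (Fin n)) × EuclideanSpace ℝ (Fin n) =>
      projC p.1 p.2) := by
  unfold projC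
  have h := (continuous_resid (n := n) (m := m)).measurable
  exact h.norm.inv.smul h

lemma projC_norm {n m : ℕ} (z : Fin m → EuclideanSpace ℝ (Fin n)) (x : EuclideanSpace ℝ (Fin n))
    (h : x - ∑ i, ⟪x, z i⟫ • z i ≠ 0) : ‖projC z x‖ = 1 := by
  unfold projC
  rw [norm_smul, norm_inv, norm_norm, inv_mul_cancel₀ (norm_ne_zero_iff.2 h)]

lemma projC_mem {n m : ℕ} (z : Fin m → EuclideanSpace ℝ (Fin n)) (hz : Orthonormal ℝ z)
    (x : EuclideanSpace ℝ (Fin n)) : projC z x ∈ (Submodule.span ℝ (Set.range z))ᗮ := by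
  unfold projC
  refine Submodule.smul_mem _ _ ?_
  rw [Submodule.mem_orthogonal]
  intro u hu
  induction hu using Submodule.span_induction with
  | mem u hu =>
    obtain ⟨j, rfl⟩ := hu
    have := hz.inner_right_fintype (fun i => ⟪x, z i⟫) j
    rw [inner_sub_right, this, real_inner_comm, sub_self]
  | zero => simp
  | add a b _ _ ha hb => rw [inner_add_left, ha, hb, add_zero]
  | smul a b _ hb => rw [inner_smul_left, hb, mul_zero]

lemma finrank_compl {n m : ℕ} (z : Fin m → EuclideanSpace ℝ (Fin n)) (hz : Orthonormal ℝ z) :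
    Module.finrank ℝ (Submodule.span ℝ (Set.range z))ᗮ = n - m := by
  have h1 := Submodule.finrank_add_finrank_orthogonal (Submodule.span ℝ (Set.range z))
  rw [finrank_span_eq_card hz.linearIndependent, finrank_euclideanSpace, Fintype.card_fin,
    Fintype.card_fin] at h1
  omega

lemma exists_transport {n m : ℕ} (hmn : m < n) (z : Fin m → EuclideanSpace ℝ (Fin n))
    (hz : Orthonormal ℝ z) :
    ∃ T : EuclideanSpace ℝ (Fin n) → EuclideanSpace ℝ (Fin (n - m)), (∀ x, ‖T x‖ = 1) ∧
      ∀ x y, x - ∑ i, ⟪x, z i⟫ • z i ≠ 0 → y - ∑ i, ⟪y, z i⟫ • z i ≠ 0 →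
        ⟪T x, T y⟫ = ⟪projC z x, projC z y⟫ := by
  classical
  let b := (stdOrthonormalBasis ℝ (Submodule.span ℝ (Set.range z))ᗮ).reindex
    (finCongr (finrank_compl z hz))
  refine ⟨fun x => if x - ∑ i, ⟪x, z i⟫ • z i = 0 then EuclideanSpace.single ⟨0, by omega⟩ 1
      else b.repr ⟨projC z x, projC_mem z hz x⟩, ?_, ?_⟩
  · intro x
    dsimp only
    split_ifs with h0
    · simp
    · rw [b.repr.norm_map]
      exact projC_norm z x h0
  · intro x y hx hy
    dsimp only
    rw [if_neg hx, if_neg hy, b.repr.inner_map_map]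
    rfl

lemma frame_psd {n m : ℕ} (hmn : m < n) {σ : Measure (EuclideanSpace ℝ (Fin n))}
    (hσ : GoodMeas n σ) (g : ℝ → ℝ) (hgmeas : Measurable g) (Cg : ℝ) (hgbd : ∀ t, |g t| ≤ Cg)
    (hgpsd : PosSemidefOnSphere (n - m) g)
    (z : Fin m → EuclideanSpace ℝ (Fin n)) (hz : Orthonormal ℝ z)
    (φ : EuclideanSpace ℝ (Fin n) → ℝ) (hφ : Measurable φ) (B : ℝ) (hB : ∀ x, |φ x| ≤ B) :
    0 ≤ ∫ p, φ p.1 * φ p.2 * g ⟪projC z p.1, projC z p.2⟫ ∂(σ.prod σ) := by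
  classical
  have := hσ.prob
  have hr : Continuous (fun x : EuclideanSpace ℝ (Fin n) => x - ∑ i, ⟪x, z i⟫ • z i) := by fun_prop
  set r := (fun x : EuclideanSpace ℝ (Fin n) => x - ∑ i, ⟪x, z i⟫ • z i) with hrdef
  set φ' : EuclideanSpace ℝ (Fin n) → ℝ := fun x => if r x = 0 then 0 else φ x with hφ'
  have hS : MeasurableSet {x | r x = 0} := (isClosed_eq hr continuous_const).measurableSet
  have hφ'm : Measurable φ' := Measurable.ite hS measurable_const hφ
  have hB0 : 0 ≤ B := (abs_nonneg _).trans (hB 0)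
  have hCg0 : 0 ≤ Cg := (abs_nonneg _).trans (hgbd 0)
  have hφ'B : ∀ x, |φ' x| ≤ B := by
    intro x
    simp only [hφ']
    split_ifs
    · simpa using hB0
    · exact hB x
  have hpm : Measurable (projC z) := by
    unfold projC
    exact hr.measurable.norm.inv.smul hr.measurable
  have hfin := finrank_compl z hz
  have hspan : Submodule.span ℝ (Set.range z) ≠ ⊤ := by
    intro h
    rw [h, Submodule.top_orthogonal_eq_bot, finrank_bot] at hfin
    omega
  have hae : ∀ᵐ x ∂σ, φ' x = φ x := by
    filter_upwards [hσ.sub _ hspan] with x hx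
    simp only [hφ']
    rw [if_neg]
    intro h0
    apply hx
    rw [sub_eq_zero.1 h0]
    exact Submodule.sum_mem _ fun i _ => Submodule.smul_mem _ _ (Submodule.subset_span ⟨i, rfl⟩)
  have h1 := Measure.quasiMeasurePreserving_fst (μ := σ) (ν := σ) |>.ae hae
  have h2 := Measure.quasiMeasurePreserving_snd (μ := σ) (ν := σ) |>.ae hae
  have heq : ∫ p, φ p.1 * φ p.2 * g ⟪projC z p.1, projC z p.2⟫ ∂(σ.prod σ) =
      ∫ p, φ' p.1 * φ' p.2 * g ⟪projC z p.1, projC z p.2⟫ ∂(σ.prod σ) := by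
    refine integral_congr_ae ?_
    filter_upwards [h1, h2] with p h1 h2
    rw [h1, h2]
  rw [heq]
  refine psd_integral σ _ ?_ (B * B * Cg) ?_ ?_
  · have h3 : Measurable fun p : EuclideanSpace ℝ (Fin n) × EuclideanSpace ℝ (Fin n) =>
        projC z p.1 := hpm.comp measurable_fst
    have h4 : Measurable fun p : EuclideanSpace ℝ (Fin n) × EuclideanSpace ℝ (Fin n) =>
        projC z p.2 := hpm.comp measurable_snd
    have h5 := hgmeas.comp (h3.inner (𝕜 := ℝ) h4)
    exact ((hφ'm.comp measurable_fst).mul (hφ'm.comp measurable_snd)).mul h5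
  · intro p
    rw [abs_mul, abs_mul]
    exact mul_le_mul (mul_le_mul (hφ'B _) (hφ'B _) (abs_nonneg _) hB0) (hgbd _) (abs_nonneg _)
      (mul_nonneg hB0 hB0)
  · intro M ω
    obtain ⟨T, hT, hT'⟩ := exists_transport hmn z hz
    have h := hgpsd M (fun i => T (ω i)) (fun i => φ' (ω i)) (fun i => hT _)
    refine h.trans_eq (Finset.sum_congr rfl fun i _ => Finset.sum_congr rfl fun j _ => ?_)
    by_cases hi : r (ω i) = 0
    · simp [hφ', hi]
    by_cases hj : r (ω j) = 0
    · simp [hφ', hj]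
    rw [hT' _ _ hi hj]

lemma measurable_hfun {n m : ℕ} (F : (Fin m → ℝ) → ℝ) (hF : Measurable F) (g : ℝ → ℝ)
    (hg : Measurable g) :
    Measurable (fun p : (EuclideanSpace ℝ (Fin n) × EuclideanSpace ℝ (Fin n)) × Stiefel n m =>
      hfun F g p.1.1 p.1.2 p.2.1) := by
  unfold hfun
  have hz : Measurable fun p : (EuclideanSpace ℝ (Fin n) × EuclideanSpace ℝ (Fin n)) × Stiefel n m =>
    p.2.1 := measurable_subtype_coe.comp measurable_snd
  have hzi : ∀ i, Measurable fun p : (EuclideanSpace ℝ (Fin n) × EuclideanSpace ℝ (Fin n)) ×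
    Stiefel n m => p.2.1 i := fun i => (measurable_pi_apply i).comp hz
  have hx : Measurable fun p : (EuclideanSpace ℝ (Fin n) × EuclideanSpace ℝ (Fin n)) × Stiefel n m =>
    p.1.1 := measurable_fst.comp measurable_fst
  have hy : Measurable fun p : (EuclideanSpace ℝ (Fin n) × EuclideanSpace ℝ (Fin n)) × Stiefel n m =>
    p.1.2 := measurable_snd.comp measurable_fst
  have h1 := measurable_projC.comp (hz.prodMk hx)
  have h2 := measurable_projC.comp (hz.prodMk hy)
  have h3 := hg.comp (h1.inner (𝕜 := ℝ) h2)
  have h4 := hF.comp (measurable_pi_lambda _ fun i => hx.inner (𝕜 := ℝ) (hzi i))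
  have h5 := hF.comp (measurable_pi_lambda _ fun i => hy.inner (𝕜 := ℝ) (hzi i))
  exact (h4.mul h5).mul h3

lemma hfun_bound {n m : ℕ} (F : (Fin m → ℝ) → ℝ) (CF : ℝ) (hF : ∀ v, |F v| ≤ CF) (g : ℝ → ℝ)
    (Cg : ℝ) (hg : ∀ t, |g t| ≤ Cg) (x y : EuclideanSpace ℝ (Fin n))
    (z : Fin m → EuclideanSpace ℝ (Fin n)) : |hfun F g x y z| ≤ CF * CF * Cg := by
  have h0 : 0 ≤ CF := (abs_nonneg _).trans (hF 0)
  unfold hfun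
  rw [abs_mul, abs_mul]
  exact mul_le_mul (mul_le_mul (hF _) (hF _) (abs_nonneg _) h0) (hg _) (abs_nonneg _)
      (mul_nonneg h0 h0)

lemma measurable_Hfun {n m : ℕ} (F : (Fin m → ℝ) → ℝ) (hF : Measurable F) (g : ℝ → ℝ)
    (hg : Measurable g) (ν : Measure (Stiefel n m)) [IsProbabilityMeasure ν] :
    Measurable (fun p : EuclideanSpace ℝ (Fin n) × EuclideanSpace ℝ (Fin n) =>
      Hfun ν F g p.1 p.2) := by
  exact ((measurable_hfun F hF g hg).stronglyMeasurable.integral_prod_right (ν := ν)).measurable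

lemma Hfun_bound {n m : ℕ} (F : (Fin m → ℝ) → ℝ) (CF : ℝ) (hF : ∀ v, |F v| ≤ CF) (g : ℝ → ℝ)
    (Cg : ℝ) (hg : ∀ t, |g t| ≤ Cg) (ν : Measure (Stiefel n m)) [IsProbabilityMeasure ν]
    (x y : EuclideanSpace ℝ (Fin n)) : |Hfun ν F g x y| ≤ CF * CF * Cg := by
  have := norm_integral_le_of_norm_le_const (μ := ν) (f := fun z => hfun F g x y z.1)
    (C := CF * CF * Cg) (Eventually.of_forall fun z => hfun_bound F CF hF g Cg hg x y z.1)
  simpa [Hfun] using this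

lemma Hfun_psd {n m : ℕ} (hmn : m < n) {σ : Measure (EuclideanSpace ℝ (Fin n))}
    (hσ : GoodMeas n σ) (F : (Fin m → ℝ) → ℝ) (hF : Measurable F) (CF : ℝ) (hFbd : ∀ v, |F v| ≤ CF)
    (g : ℝ → ℝ) (hgmeas : Measurable g) (Cg : ℝ) (hgbd : ∀ t, |g t| ≤ Cg)
    (hgpsd : PosSemidefOnSphere (n - m) g) (ν : Measure (Stiefel n m)) [IsProbabilityMeasure ν]
    (f : EuclideanSpace ℝ (Fin n) → ℝ) (hf : Measurable f) (B : ℝ) (hB : ∀ x, |f x| ≤ B) :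
    0 ≤ ∫ p, Hfun ν F g p.1 p.2 * (f p.1 * f p.2) ∂(σ.prod σ) := by
  have := hσ.prob
  have hB0 : 0 ≤ B := (abs_nonneg _).trans (hB 0)
  have hCF0 : 0 ≤ CF := (abs_nonneg _).trans (hFbd 0)
  have hCg0 : 0 ≤ Cg := (abs_nonneg _).trans (hgbd 0)
  have e1 : ∀ p : EuclideanSpace ℝ (Fin n) × EuclideanSpace ℝ (Fin n),
      Hfun ν F g p.1 p.2 * (f p.1 * f p.2) = ∫ z, hfun F g p.1 p.2 z.1 * (f p.1 * f p.2) ∂ν := by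
    intro p
    rw [integral_mul_const]; rfl
  simp_rw [e1]
  have hm : Measurable (fun q : (EuclideanSpace ℝ (Fin n) × EuclideanSpace ℝ (Fin n)) × Stiefel n m =>
      hfun F g q.1.1 q.1.2 q.2.1 * (f q.1.1 * f q.1.2)) :=
    (measurable_hfun F hF g hgmeas).mul ((hf.comp (measurable_fst.comp measurable_fst)).mul
      (hf.comp (measurable_snd.comp measurable_fst)))
  rw [integral_integral_swap]
  · refine integral_nonneg fun z => ?_
    have := frame_psd hmn hσ g hgmeas Cg hgbd hgpsd z.1 z.2
      (fun x => F (fun i => ⟪x, z.1 i⟫) * f x) (by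
        refine Measurable.mul (hF.comp (measurable_pi_lambda _ fun i => ?_)) hf
        fun_prop) (CF * B) (by
        intro x
        rw [abs_mul]
        exact mul_le_mul (hFbd _) (hB _) (abs_nonneg _) hCF0)
    refine this.trans_eq (integral_congr_ae (Eventually.of_forall fun p => ?_))
    simp only [hfun]
    ring
  · refine Integrable.of_bound hm.aestronglyMeasurable (CF * CF * Cg * (B * B))
      (Eventually.of_forall fun q => ?_)
    simp only [Function.uncurry, Real.norm_eq_abs]
    rw [abs_mul, abs_mul (f _)]
    exact mul_le_mul (hfun_bound F CF hFbd g Cg hgbd _ _ _)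
      (mul_le_mul (hB _) (hB _) (abs_nonneg _) hB0) (by positivity) (by positivity)



lemma projC_iso {n m : ℕ} (A : EuclideanSpace ℝ (Fin n) ≃ₗᵢ[ℝ] EuclideanSpace ℝ (Fin n))
    (z : Fin m → EuclideanSpace ℝ (Fin n)) (x : EuclideanSpace ℝ (Fin n)) :
    projC (fun i => A (z i)) (A x) = A (projC z x) := by
  unfold projC
  have : A x - ∑ i, ⟪A x, A (z i)⟫ • A (z i) = A (x - ∑ i, ⟪x, z i⟫ • z i) := by
    simp only [A.inner_map_map, map_sub, map_sum, map_smul]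
  rw [this, A.norm_map, map_smul]

lemma hfun_iso {n m : ℕ} (F : (Fin m → ℝ) → ℝ) (g : ℝ → ℝ)
    (A : EuclideanSpace ℝ (Fin n) ≃ₗᵢ[ℝ] EuclideanSpace ℝ (Fin n))
    (z : Fin m → EuclideanSpace ℝ (Fin n)) (x y : EuclideanSpace ℝ (Fin n)) :
    hfun F g (A x) (A y) (fun i => A (z i)) = hfun F g x y z := by
  unfold hfun
  simp only [projC_iso, A.inner_map_map]

lemma Hfun_iso {n m : ℕ} (F : (Fin m → ℝ) → ℝ) (hF : Measurable F) (g : ℝ → ℝ)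
    (hg : Measurable g) (ν : Measure (Stiefel n m)) (hν : IsInvProb ν)
    (A : EuclideanSpace ℝ (Fin n) ≃ₗᵢ[ℝ] EuclideanSpace ℝ (Fin n)) (x y : EuclideanSpace ℝ (Fin n)) :
    Hfun ν F g (A x) (A y) = Hfun ν F g x y := by
  unfold Hfun
  have hA : Measurable (frameMap A : Stiefel n m → Stiefel n m) := by
    refine Measurable.subtype_mk (measurable_pi_lambda _ fun i => ?_)
    exact A.continuous.measurable.comp ((measurable_pi_apply i).comp measurable_subtype_coe)
  have hm : Measurable fun z : Stiefel n m => hfun F g (A x) (A y) z.1 := by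
    have h1 : Measurable fun z : Stiefel n m => ((A x, A y), z) := measurable_prodMk_left
    have h2 := (measurable_hfun (n := n) F hF g hg).comp h1
    exact h2
  conv_lhs => rw [← hν.2 A]
  rw [integral_map hA.aemeasurable hm.aestronglyMeasurable]
  exact integral_congr_ae (Eventually.of_forall fun z => hfun_iso F g A z.1 x y)

lemma Hfun_eq_HofT {n m : ℕ} (hn : 2 ≤ n) (F : (Fin m → ℝ) → ℝ) (hF : Measurable F) (g : ℝ → ℝ)
    (hg : Measurable g) (ν : Measure (Stiefel n m)) (hν : IsInvProb ν)
    (x y : EuclideanSpace ℝ (Fin n)) (hx : ‖x‖ = 1) (hy : ‖y‖ = 1) :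
    Hfun ν F g x y = HofT hn ν F g ⟪x, y⟫ := by
  obtain ⟨b, hb0, hb1⟩ := exists_basis_pair hn x y hx hy
  rw [← Hfun_iso F hF g hg ν hν b.repr x y]
  unfold HofT
  have e1 : b.repr x = EuclideanSpace.single (⟨0, by omega⟩ : Fin n) 1 := by
    rw [← hb0, b.repr_self]
  have e2 : b.repr y = ⟪x, y⟫ • EuclideanSpace.single (⟨0, by omega⟩ : Fin n) 1 +
      Real.sqrt (1 - ⟪x, y⟫ ^ 2) • EuclideanSpace.single (⟨1, by omega⟩ : Fin n) 1 := by
    conv_lhs => rw [hb1]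
    rw [map_add, map_smul, map_smul, b.repr_self, b.repr_self]
  rw [e1, e2]

lemma measurable_HofT {n m : ℕ} (hn : 2 ≤ n) (F : (Fin m → ℝ) → ℝ) (hF : Measurable F) (g : ℝ → ℝ)
    (hg : Measurable g) (ν : Measure (Stiefel n m)) [IsProbabilityMeasure ν] :
    Measurable (HofT hn ν F g) := by
  unfold HofT
  have h1 : Measurable fun t : ℝ => (EuclideanSpace.single (⟨0, by omega⟩ : Fin n) (1:ℝ),
    t • EuclideanSpace.single (⟨0, by omega⟩ : Fin n) (1:ℝ) +
      Real.sqrt (1 - t ^ 2) • EuclideanSpace.single (⟨1, by omega⟩ : Fin n) (1:ℝ)) :=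
    Continuous.measurable (by fun_prop)
  have h2 := (measurable_Hfun F hF g hg ν).comp h1
  exact h2

/-- Nonnegativity of the Jacobi coefficients of the Stiefel average `H`. -/
theorem stiefel_average_jacobi_coeffs_nonneg
    (n m : ℕ) (hm : 1 ≤ m) (hmn : m ≤ n - 2) (hn : 2 ≤ n)
    (F : (Fin m → ℝ) → ℝ) (hFmeas : Measurable F) (CF : ℝ) (hFbd : ∀ v, |F v| ≤ CF)
    (g : ℝ → ℝ) (hgmeas : Measurable g) (Cg : ℝ) (hgbd : ∀ t, |g t| ≤ Cg)
    (hgpsd : PosSemidefOnSphere (n - m) g)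
    (ν : Measure (Stiefel n m)) (hν : IsInvProb ν) (k : ℕ) :
    0 ≤ ∫ t in (-1 : ℝ)..1,
        HofT hn ν F g t * jacobiP (((n : ℝ) - 3) / 2) (((n : ℝ) - 3) / 2) k t *
          (1 - t ^ 2) ^ (((n : ℝ) - 3) / 2) := by
  have hn3 : 3 ≤ n := by omega
  have hνp := hν.1
  obtain ⟨σ, hσ⟩ := exists_good n hn3
  have := hσ.prob
  obtain ⟨c, hc, hkey⟩ := hσ.key hn3 k
  obtain ⟨C, hC, hlaw⟩ := hσ.law
  simp only [← jacPoly_eval]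
  set P := jacPoly (((n : ℝ) - 3) / 2) k with hP
  set q : ℝ → ℝ := fun t => P.eval (max (-1) (min 1 t)) with hq
  have hqc : Continuous q := by
    have := P.continuous
    exact this.comp (by fun_prop)
  have hqe : ∀ t ∈ Set.Icc (-1:ℝ) 1, q t = P.eval t := by
    intro t ht
    simp only [hq]
    rw [min_eq_right ht.2, max_eq_right ht.1]
  obtain ⟨B, hB⟩ := isCompact_Icc.exists_bound_of_continuousOn (s := Set.Icc (-1:ℝ) 1)
    P.continuous.continuousOn
  have hqB : ∀ t, |q t| ≤ B := fun t => hB _ ⟨le_max_left _ _, max_le (by norm_num) (min_le_left _ _)⟩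
  have hB0 : 0 ≤ B := (abs_nonneg _).trans (hqB 0)
  have hH0 : 0 ≤ CF * CF * Cg := (abs_nonneg _).trans (Hfun_bound F CF hFbd g Cg hgbd ν 0 0)
  have hin : ∀ x y : EuclideanSpace ℝ (Fin n), ‖x‖ = 1 → ‖y‖ = 1 → ⟪x, y⟫ ∈ Set.Icc (-1:ℝ) 1 := by
    intro x y hx hy
    have := abs_real_inner_le_norm x y
    rw [hx, hy, one_mul] at this
    exact abs_le.1 this
  have hpos : 0 ≤ ∫ e, ∫ p, Hfun ν F g p.1 p.2 * (q ⟪p.1, e⟫ * q ⟪p.2, e⟫) ∂(σ.prod σ) ∂σ := by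
    refine integral_nonneg fun e => ?_
    exact Hfun_psd (by omega) hσ F hFmeas CF hFbd g hgmeas Cg hgbd hgpsd ν (fun x => q ⟪x, e⟫)
      (hqc.comp (by fun_prop)).measurable B (fun x => hqB _)
  have hHm := measurable_Hfun F hFmeas g hgmeas ν
  rw [integral_integral_swap] at hpos
  swap
  · refine Integrable.of_bound (C := CF * CF * Cg * (B * B)) ?_ (Eventually.of_forall fun r => ?_)
    · have h1 : Measurable fun r : EuclideanSpace ℝ (Fin n) ×
          (EuclideanSpace ℝ (Fin n) × EuclideanSpace ℝ (Fin n)) => Hfun ν F g r.2.1 r.2.2 :=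
        hHm.comp measurable_snd
      have h2 : Continuous fun r : EuclideanSpace ℝ (Fin n) ×
          (EuclideanSpace ℝ (Fin n) × EuclideanSpace ℝ (Fin n)) =>
            q ⟪r.2.1, r.1⟫ * q ⟪r.2.2, r.1⟫ := by fun_prop
      exact (h1.mul h2.measurable).aestronglyMeasurable
    · simp only [Function.uncurry, Real.norm_eq_abs]
      rw [abs_mul, abs_mul (q _)]
      exact mul_le_mul (Hfun_bound F CF hFbd g Cg hgbd ν _ _)
        (mul_le_mul (hqB _) (hqB _) (abs_nonneg _) hB0) (by positivity) (by positivity)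
  set G : ℝ → ℝ := fun t => HofT hn ν F g t * (c * q t) with hG
  have hGm : Measurable G := (measurable_HofT hn F hFmeas g hgmeas ν).mul
    (measurable_const.mul hqc.measurable)
  have hGB : ∀ t, |G t| ≤ CF * CF * Cg * (c * B) := by
    intro t
    simp only [hG]
    rw [abs_mul, abs_mul, abs_of_pos hc]
    exact mul_le_mul (Hfun_bound F CF hFbd g Cg hgbd ν _ _)
      (mul_le_mul_of_nonneg_left (hqB _) hc.le) (by positivity) (by positivity)
  have hae : ∀ᵐ p ∂(σ.prod σ), ∫ e, Hfun ν F g p.1 p.2 * (q ⟪p.1, e⟫ * q ⟪p.2, e⟫) ∂σ =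
      G ⟪p.1, p.2⟫ := by
    filter_upwards [hσ.ae_prod] with p hp
    rw [integral_const_mul, Hfun_eq_HofT hn F hFmeas g hgmeas ν hν p.1 p.2 hp.1 hp.2]
    simp only [hG]
    congr 1
    rw [hqe _ (hin _ _ hp.1 hp.2), ← hkey p.1 p.2 hp.1 hp.2]
    refine integral_congr_ae ?_
    filter_upwards [hσ.norm] with e he
    rw [hqe _ (hin _ _ hp.1 he), hqe _ (hin _ _ hp.2 he)]
  rw [integral_congr_ae hae] at hpos
  have hGi : Integrable (fun p : EuclideanSpace ℝ (Fin n) × EuclideanSpace ℝ (Fin n) =>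
      G ⟪p.1, p.2⟫) (σ.prod σ) := by
    refine Integrable.of_bound (C := CF * CF * Cg * (c * B)) ?_ (Eventually.of_forall fun r => hGB _)
    have : Continuous fun p : EuclideanSpace ℝ (Fin n) × EuclideanSpace ℝ (Fin n) => ⟪p.1, p.2⟫ := by
      fun_prop
    exact (hGm.comp this.measurable).aestronglyMeasurable
  rw [integral_prod _ hGi] at hpos
  have hae2 : ∀ᵐ x ∂σ, ∫ y, G ⟪x, y⟫ ∂σ =
      C * ∫ t in (-1:ℝ)..1, G t * (1 - t^2) ^ (((n:ℝ) - 3)/2) := by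
    filter_upwards [hσ.norm] with x hx
    exact hlaw x hx G hGm _ (fun t _ => hGB t)
  rw [integral_congr_ae hae2] at hpos
  simp only [integral_const, probReal_univ, one_smul] at hpos
  have hfin : ∫ t in (-1:ℝ)..1, G t * (1 - t^2) ^ (((n:ℝ) - 3)/2) =
      c * ∫ t in (-1:ℝ)..1, HofT hn ν F g t * P.eval t * (1 - t^2) ^ (((n:ℝ) - 3)/2) := by
    rw [← intervalIntegral.integral_const_mul]
    refine intervalIntegral.integral_congr fun t ht => ?_
    rw [Set.uIcc_of_le (by norm_num)] at ht
    simp only [hG]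
    rw [hqe t ht]
    ring
  rw [hfin] at hpos
  exact nonneg_of_mul_nonneg_right (nonneg_of_mul_nonneg_right hpos hC) hc
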